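/- arXiv:quant-ph/0702008 — 9 statements merged into one kernel-verified Lean document; each statement's English description precedes it below -/
import Mathlib

section
/- (Fortuin–Kasteleyn representation of the Potts model.) Let G = (V,E) be a finite simple graph, let q be a positive integer, and let v : E → ℂ assign a complex weight v_e to each edge. Then Σ_{σ : V → {1,…,q}} Π_{e = {a,b} ∈ E} (1 + v_e · [σ(a) = σ(b)]) = Σ_{A ⊆ E} q^{k(A)} Π_{e ∈ A} v_e, where [σ(a) = σ(b)] is 1 if the two endpoints of e receive the same color and 0 otherwise. -/
/-- The number of connected components of the graph on `V` with edge set `A`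
(isolated vertices count as components). -/
noncomputable def numComponents {V : Type*} (A : Set (Sym2 V)) : ℕ :=
  Nat.card (SimpleGraph.fromEdgeSet A).ConnectedComponent

/-- Colorings constant on the edges of `A` correspond to colorings of the components. -/
noncomputable def colEquiv {V C : Type*} (A : Set (Sym2 V)) :
    {σ : V → C // ∀ e ∈ A, (Sym2.map σ e).IsDiag} ≃
      ((SimpleGraph.fromEdgeSet A).ConnectedComponent → C) where
  toFun σ := Quot.lift σ.1 (by
    rintro a b ⟨p⟩
    induction p with
    | nil => rfl
    | cons hadj _ ih =>
      refine Eq.trans ?_ ih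
      have h := σ.2 _ ((SimpleGraph.fromEdgeSet_adj A).1 hadj).1
      simpa using h)
  invFun f := ⟨fun a => f (SimpleGraph.connectedComponentMk _ a), by
    intro e he
    induction e with
    | _ a b =>
      simp only [Sym2.map_mk, Sym2.mk_isDiag_iff]
      by_cases hab : a = b
      · rw [hab]
      · exact congrArg f (SimpleGraph.ConnectedComponent.sound
          (SimpleGraph.Adj.reachable ((SimpleGraph.fromEdgeSet_adj A).2 ⟨he, hab⟩)))⟩
  left_inv σ := by
    apply Subtype.ext
    rfl
  right_inv f := by
    funext c
    induction c using SimpleGraph.ConnectedComponent.ind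
    rfl

theorem card_col {V : Type*} [Fintype V] [DecidableEq V] (q : ℕ) (A : Finset (Sym2 V)) :
    (Finset.univ.filter (fun σ : V → Fin q => ∀ e ∈ A, (Sym2.map σ e).IsDiag)).card =
      q ^ numComponents (A : Set (Sym2 V)) := by
  have h := Nat.card_congr (colEquiv (C := Fin q) (A : Set (Sym2 V)))
  haveI : Finite (SimpleGraph.fromEdgeSet (A : Set (Sym2 V))).ConnectedComponent :=
    Quot.finite _
  rw [Nat.card_fun, Nat.card_fin] at h
  rw [numComponents, ← h, Nat.card_eq_fintype_card, Fintype.card_subtype]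
  simp

/-- Fortuin–Kasteleyn representation of the Potts partition function:
`Σ_σ Π_{e∈E} (1 + v_e [σ const on e]) = Σ_{A⊆E} q^{k(A)} Π_{e∈A} v_e`. -/
theorem stmt1 {V : Type*} [Fintype V] [DecidableEq V] (G : SimpleGraph V)
    [DecidableRel G.Adj] (q : ℕ) (hq : 0 < q) (v : Sym2 V → ℂ) :
    ∑ σ : V → Fin q, ∏ e ∈ G.edgeFinset,
        (1 + v e * (if Sym2.IsDiag (Sym2.map σ e) then 1 else 0)) =
      ∑ A ∈ G.edgeFinset.powerset,
        (q : ℂ) ^ numComponents (A : Set (Sym2 V)) * ∏ e ∈ A, v e := by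
  simp_rw [Finset.prod_one_add]
  rw [Finset.sum_comm]
  refine Finset.sum_congr rfl fun A _ => ?_
  simp_rw [Finset.prod_mul_distrib]
  rw [← Finset.mul_sum, mul_comm]
  congr 1
  simp_rw [Finset.prod_ite_zero]
  rw [← Nat.cast_pow, ← card_col q A]
  simp
end

section
/- Let H be a nonzero finite-dimensional complex inner product space and let M : H → H be a nonzero linear map, with ‖M‖ its operator norm. Then there exist a unitary map (linear isometry equivalence) U of H × H (with the product inner product) and a linear map γ : H → H such that for every α ∈ H, U(α, 0) = (‖M‖⁻¹ • M α, γ α). In particular, projecting the second (ancilla) component onto 0 recovers the normalized operator M/‖M‖ applied to α. -/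
/-- Any nonzero operator `M`, rescaled by its operator norm, can be realized as one
block of a unitary on `H ⊕ H` (with the product inner product): there is a unitary `U`
and a linear map `γ` with `U(α,0) = (‖M‖⁻¹ • M α, γ α)` for all `α`. -/
theorem stmt3 {H : Type*} [NormedAddCommGroup H] [InnerProductSpace ℂ H]
    [FiniteDimensional ℂ H] [Nontrivial H] (M : H →L[ℂ] H) (hM : M ≠ 0) :
    ∃ (U : WithLp 2 (H × H) ≃ₗᵢ[ℂ] WithLp 2 (H × H)) (γ : H →ₗ[ℂ] H),
      ∀ α : H,
        U ((WithLp.equiv 2 (H × H)).symm (α, 0)) =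
          (WithLp.equiv 2 (H × H)).symm (‖M‖⁻¹ • M α, γ α) := by
  classical
  haveI : CompleteSpace H := FiniteDimensional.complete ℂ H
  let N : H →L[ℂ] H := ((‖M‖⁻¹ : ℝ) : ℂ) • M
  have hM0 : 0 < ‖M‖ := norm_pos_iff.mpr hM
  have hN : ∀ x, ‖N x‖ ≤ ‖x‖ := by
    intro x
    have h1 : ‖N x‖ = ‖M‖⁻¹ * ‖M x‖ := by
      simp [N, norm_smul]
    rw [h1, inv_mul_le_iff₀ hM0]
    exact M.le_opNorm x
  have hre : ∀ (A : H →L[ℂ] H) (x : H),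
      inner ℂ ((star A * A) x) x = ((‖A x‖ ^ 2 : ℝ) : ℂ) := by
    intro A x
    rw [ContinuousLinearMap.star_eq_adjoint, ContinuousLinearMap.mul_apply,
      ContinuousLinearMap.adjoint_inner_left, inner_self_eq_norm_sq_to_K]
    push_cast
    rfl
  have hpos : (0 : H →L[ℂ] H) ≤ 1 - star N * N := by
    rw [ContinuousLinearMap.nonneg_iff_isPositive, ContinuousLinearMap.isPositive_iff_complex]
    intro x
    have h2 : inner ℂ ((1 - star N * N : H →L[ℂ] H) x) x
        = ((‖x‖ ^ 2 - ‖N x‖ ^ 2 : ℝ) : ℂ) := by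
      rw [ContinuousLinearMap.sub_apply, inner_sub_left, hre, ContinuousLinearMap.one_apply,
        inner_self_eq_norm_sq_to_K]
      push_cast
      rfl
    rw [h2]
    refine ⟨by rw [RCLike.re_eq_complex_re, Complex.ofReal_re], ?_⟩
    have := hN x
    have h3 : ‖N x‖ ^ 2 ≤ ‖x‖ ^ 2 := by gcongr
    rw [RCLike.re_eq_complex_re, Complex.ofReal_re]
    linarith
  obtain ⟨γ, hγ⟩ := CStarAlgebra.nonneg_iff_eq_star_mul_self.mp hpos
  have hnorm : ∀ x, ‖N x‖ ^ 2 + ‖γ x‖ ^ 2 = ‖x‖ ^ 2 := by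
    intro x
    have h4 := hre γ x
    rw [← hγ, ContinuousLinearMap.sub_apply, inner_sub_left, hre, ContinuousLinearMap.one_apply,
      inner_self_eq_norm_sq_to_K] at h4
    have h5 : ((‖x‖ ^ 2 - ‖N x‖ ^ 2 : ℝ) : ℂ) = ((‖γ x‖ ^ 2 : ℝ) : ℂ) := by
      rw [← h4]; push_cast; rfl
    have h6 := Complex.ofReal_injective h5
    linarith
  let V : H →ₗᵢ[ℂ] WithLp 2 (H × H) :=
    { toLinearMap := (WithLp.linearEquiv 2 ℂ (H × H)).symm.toLinearMap ∘ₗ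
        (N.toLinearMap.prod γ.toLinearMap)
      norm_map' := by
        intro x
        rw [WithLp.prod_norm_eq_of_L2]
        rw [Real.sqrt_eq_iff_mul_self_eq (by positivity) (norm_nonneg _), ← sq]
        exact hnorm x }
  let I : H →ₗᵢ[ℂ] WithLp 2 (H × H) :=
    { toLinearMap := (WithLp.linearEquiv 2 ℂ (H × H)).symm.toLinearMap ∘ₗ
        (LinearMap.inl ℂ H H)
      norm_map' := by
        intro x
        rw [WithLp.prod_norm_eq_of_L2]
        simp }
  let L := V.comp I.equivRange.symm.toLinearIsometry
  refine ⟨L.extend.toLinearIsometryEquiv rfl, γ.toLinearMap, fun α => ?_⟩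
  have h7 := L.extend_apply (I.equivRange α)
  have h8 : L (I.equivRange α) = V α := by
    simp [L]
  rw [h8] at h7
  exact h7
end

section
/- Let α, v, d, s ∈ ℂ with α ≠ 0, d ≠ 0, and 1 + v ≠ 0, and suppose s² = d² − 1. Set q = d², and define the 2×2 complex matrices X = [[α, 0], [0, α⁻¹]] and Y = I₂ + (v/q)·[[1, s], [s, q−1]]. Then Y is invertible (det Y = 1 + v) and Tr(X Y X⁻¹ Y⁻¹) − 2 = −((q−1)/q²) · (v²/(1+v)) · (α − α⁻¹)². Equivalently, writing β² = 1 + v, this equals −((q−1)/q²)·(β − β⁻¹)²·(α − α⁻¹)². -/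
/-- For `X = diag(α, α⁻¹)` and `Y = I + (v/q)·[[1,s],[s,q−1]]` with `q = d²`,
`s² = q − 1`: `det Y = 1 + v` and
`Tr(XYX⁻¹Y⁻¹) − 2 = −((q−1)/q²)·(v²/(1+v))·(α − α⁻¹)²`. -/
theorem stmt6 (α v d s : ℂ) (hα : α ≠ 0) (hd : d ≠ 0) (hv : 1 + v ≠ 0)
    (hs : s ^ 2 = d ^ 2 - 1)
    (X Y : Matrix (Fin 2) (Fin 2) ℂ)
    (hX : X = !![α, 0; 0, α⁻¹])
    (hY : Y = 1 + (v / d ^ 2) • !![1, s; s, d ^ 2 - 1]) :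
    Y.det = 1 + v ∧
      Matrix.trace (X * Y * X⁻¹ * Y⁻¹) - 2 =
        -((d ^ 2 - 1) / (d ^ 2) ^ 2) * (v ^ 2 / (1 + v)) * (α - α⁻¹) ^ 2 := by
  have hY' : Y = !![1 + v / d ^ 2, v / d ^ 2 * s; v / d ^ 2 * s, 1 + v / d ^ 2 * (d ^ 2 - 1)] := by
    rw [hY]
    ext i j
    fin_cases i <;> fin_cases j <;> simp
  have hdet : Y.det = 1 + v := by
    rw [hY', Matrix.det_fin_two_of]
    have h : v / d ^ 2 * s * (v / d ^ 2 * s) = (v / d ^ 2) ^ 2 * (d ^ 2 - 1) := by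
      rw [← hs]; ring
    rw [h]
    field_simp
    ring
  refine ⟨hdet, ?_⟩
  have hXi : X⁻¹ = !![α⁻¹, 0; 0, α] := by
    apply Matrix.inv_eq_right_inv
    rw [hX]
    ext i j
    fin_cases i <;> fin_cases j <;> simp [Matrix.mul_apply, hα]
  have key : ∀ a b c : ℂ, a * c - b * b = 1 + v → Y = !![a, b; b, c] →
      Matrix.trace (X * Y * X⁻¹ * Y⁻¹) - 2 = -(b ^ 2 / (1 + v)) * (α - α⁻¹) ^ 2 := by
    intro a b c h hYe
    have hYi : Y⁻¹ = (1 + v)⁻¹ • !![c, -b; -b, a] := by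
      rw [Matrix.inv_def, hdet, Ring.inverse_eq_inv', hYe, Matrix.adjugate_fin_two_of]
    rw [hYi, hXi, hX, hYe]
    simp only [Matrix.mul_smul, Matrix.trace_smul, Matrix.trace_fin_two, Matrix.mul_apply,
      Fin.sum_univ_two, smul_eq_mul]
    simp
    field_simp
    linear_combination (2 * α ^ 2) * h
  rw [key _ _ _ (by rw [← hdet, hY', Matrix.det_fin_two_of]) hY', ← hs]
  field_simp
end

section
/- Let G be a subgroup of SL(2,ℂ), let g ∈ GL(2,ℂ), and let H = { g·A·g⁻¹ : A ∈ SL(2,ℝ) } (the conjugate of SL(2,ℝ) inside SL(2,ℂ)). If H is contained in G and H is a normal subgroup of G, then for every f ∈ G the trace Tr(f) is either a real number or a purely imaginary number. -/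
theorem aux_conj (g f : Matrix (Fin 2) (Fin 2) ℂ) (hg : IsUnit g.det)
    (A B fi : Matrix (Fin 2) (Fin 2) ℂ) (hf : fi * f = 1)
    (h : f * (g * A * g⁻¹) * fi = g * B * g⁻¹) :
    (g⁻¹ * f * g) * A = B * (g⁻¹ * f * g) := by
  have h1 : g⁻¹ * g = 1 := Matrix.nonsing_inv_mul g hg
  have e : g⁻¹ * (f * (g * A * g⁻¹) * fi) * f * g = g⁻¹ * (g * B * g⁻¹) * f * g := by rw [h]
  calc (g⁻¹ * f * g) * A = g⁻¹ * f * g * A * (g⁻¹ * g) := by rw [h1, mul_one]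
    _ = g⁻¹ * f * g * A * g⁻¹ * (fi * f) * g := by rw [hf]; simp only [mul_assoc, mul_one, one_mul]
    _ = g⁻¹ * (f * (g * A * g⁻¹) * fi) * f * g := by simp only [mul_assoc]
    _ = g⁻¹ * (g * B * g⁻¹) * f * g := e
    _ = (g⁻¹ * g) * B * g⁻¹ * f * g := by simp only [mul_assoc]
    _ = B * (g⁻¹ * f * g) := by rw [h1]; simp only [mul_assoc, one_mul]

/-- If a conjugate `H = g·SL(2,ℝ)·g⁻¹` is a normal subgroup of a subgroup `G` of
`SL(2,ℂ)`, then the trace of every element of `G` is real or purely imaginary. -/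
theorem stmt8 (G : Subgroup (Matrix.SpecialLinearGroup (Fin 2) ℂ))
    (g : Matrix (Fin 2) (Fin 2) ℂ) (hg : IsUnit g)
    (H : Set (Matrix.SpecialLinearGroup (Fin 2) ℂ))
    (hH : H = {M : Matrix.SpecialLinearGroup (Fin 2) ℂ | ∃ A : Matrix (Fin 2) (Fin 2) ℝ, A.det = 1 ∧
        (M : Matrix (Fin 2) (Fin 2) ℂ) = g * A.map Complex.ofReal * g⁻¹})
    (hHG : H ⊆ (G : Set (Matrix.SpecialLinearGroup (Fin 2) ℂ)))
    (hnormal : ∀ x ∈ G, ∀ h ∈ H, x * h * x⁻¹ ∈ H) :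
    ∀ f ∈ G, (Matrix.trace (f : Matrix (Fin 2) (Fin 2) ℂ)).im = 0 ∨
      (Matrix.trace (f : Matrix (Fin 2) (Fin 2) ℂ)).re = 0 := by
  intro f hf
  have hd : IsUnit g.det := (Matrix.isUnit_iff_isUnit_det g).1 hg
  have h1 : g * g⁻¹ = 1 := Matrix.mul_nonsing_inv g hd
  have hdd : g.det * (g⁻¹).det = 1 := by rw [← Matrix.det_mul, h1, Matrix.det_one]
  have key : ∀ A : Matrix (Fin 2) (Fin 2) ℝ, A.det = 1 → ∃ B : Matrix (Fin 2) (Fin 2) ℝ,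
      (g⁻¹ * (f : Matrix (Fin 2) (Fin 2) ℂ) * g) * A.map Complex.ofReal
        = B.map Complex.ofReal * (g⁻¹ * (f : Matrix (Fin 2) (Fin 2) ℂ) * g) := by
    intro A hA
    have hA' : (A.map Complex.ofReal).det = 1 := by
      rw [Matrix.det_fin_two] at hA ⊢
      simp only [Matrix.map_apply]
      exact_mod_cast hA
    have hM : (g * A.map Complex.ofReal * g⁻¹).det = 1 := by
      rw [Matrix.det_mul, Matrix.det_mul, hA', mul_one, hdd]
    have hm : (⟨_, hM⟩ : Matrix.SpecialLinearGroup (Fin 2) ℂ) ∈ H := by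
      rw [hH]; exact ⟨A, hA, rfl⟩
    have h2 := hnormal f hf _ hm
    rw [hH] at h2
    obtain ⟨B, -, hB⟩ := h2
    refine ⟨B, aux_conj g f hd _ _ ((f⁻¹ : Matrix.SpecialLinearGroup (Fin 2) ℂ) : Matrix (Fin 2) (Fin 2) ℂ) ?_ ?_⟩
    · rw [← Matrix.SpecialLinearGroup.coe_mul, inv_mul_cancel, Matrix.SpecialLinearGroup.coe_one]
    · rw [← hB]; rfl
  have htr : Matrix.trace (f : Matrix (Fin 2) (Fin 2) ℂ)
      = Matrix.trace (g⁻¹ * (f : Matrix (Fin 2) (Fin 2) ℂ) * g) := by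
    rw [Matrix.trace_mul_comm, ← mul_assoc, h1, one_mul]
  have hdet : (g⁻¹ * (f : Matrix (Fin 2) (Fin 2) ℂ) * g).det = 1 := by
    rw [Matrix.det_mul, Matrix.det_mul, f.2, mul_one, mul_comm, hdd]
  rw [htr]
  generalize g⁻¹ * (f : Matrix (Fin 2) (Fin 2) ℂ) * g = F at key hdet
  rw [Matrix.det_fin_two] at hdet
  rw [Matrix.trace_fin_two]
  have ent : ∀ p q r s : ℝ, p * s - q * r = 1 → ∃ x y z w : ℝ,
      F 0 0 * p + F 0 1 * r = x * F 0 0 + y * F 1 0 ∧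
      F 0 0 * q + F 0 1 * s = x * F 0 1 + y * F 1 1 ∧
      F 1 0 * p + F 1 1 * r = z * F 0 0 + w * F 1 0 ∧
      F 1 0 * q + F 1 1 * s = z * F 0 1 + w * F 1 1 := by
    intro p q r s h
    obtain ⟨B, hB⟩ := key !![p, q; r, s] (by rw [Matrix.det_fin_two_of]; exact h)
    refine ⟨B 0 0, B 0 1, B 1 0, B 1 1, ?_, ?_, ?_, ?_⟩
    · simpa [Matrix.mul_apply, Fin.sum_univ_two] using congrFun (congrFun hB 0) 0
    · simpa [Matrix.mul_apply, Fin.sum_univ_two] using congrFun (congrFun hB 0) 1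
    · simpa [Matrix.mul_apply, Fin.sum_univ_two] using congrFun (congrFun hB 1) 0
    · simpa [Matrix.mul_apply, Fin.sum_univ_two] using congrFun (congrFun hB 1) 1
  generalize F 0 0 = a at *
  generalize F 0 1 = b at *
  generalize F 1 0 = c at *
  generalize F 1 1 = d at *
  obtain ⟨x1, y1, z1, w1, e1, e2, e3, e4⟩ := ent 1 1 0 1 (by norm_num)
  obtain ⟨x2, y2, z2, w2, k1, k2, k3, k4⟩ := ent 1 0 1 1 (by norm_num)
  obtain ⟨x3, y3, z3, w3, l1, l2, l3, l4⟩ := ent 2 0 0 (1/2) (by norm_num)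
  push_cast at *
  have ha : a * a = (y1 : ℂ) := by linear_combination a * e2 - b * e1 + (y1 : ℂ) * hdet
  have hdd2 : d * d = (z2 : ℂ) := by linear_combination d * k3 - c * k4 + (z2 : ℂ) * hdet
  have had : a * d = (((x3 - 1/2) * (2/3) : ℝ) : ℂ) := by
    push_cast
    linear_combination (2/3 : ℂ) * (d * l1 - c * l2 + ((x3 : ℂ) - 1/2) * hdet)
  have hsq : (a + d) * (a + d) = ((y1 + z2 + 2 * ((x3 - 1/2) * (2/3)) : ℝ) : ℂ) := by
    rw [Complex.ofReal_add, Complex.ofReal_add, Complex.ofReal_mul 2, ← had, ← ha, ← hdd2]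
    push_cast
    ring
  have him := congrArg Complex.im hsq
  rw [Complex.mul_im, Complex.ofReal_im] at him
  have : (a + d).im * (a + d).re = 0 := by linarith
  exact mul_eq_zero.1 this
end

section
/- (Non-unitary Bridge lemma.) Let C be a finite-dimensional complex vector space and let A, B be subspaces with C = A ⊕ B (internal direct sum) and dim B > dim A ≥ 1. Let W be a linear automorphism of C with det W = 1, W(A) ≠ A and W(B) ≠ B. Let G_A be the set of linear automorphisms T of C with det T = 1, T(A) = A, and T(b) = b for all b ∈ B, and let G_B be the set of linear automorphisms T with det T = 1, T(B) = B, and T(a) = a for all a ∈ A. Then the subgroup of the automorphism group of C generated by G_A ∪ G_B ∪ {W} is exactly the group of all linear automorphisms of C of determinant 1. -/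
namespace Bridge

open Module

variable {C : Type*} [AddCommGroup C] [Module ℂ C]

/-- The full one-parameter group of transvections `x ↦ x + t f(x) v` lies in `H`. -/
def Tr (H : Subgroup (C ≃ₗ[ℂ] C)) (v : C) (f : Dual ℂ C) : Prop :=
  f v = 0 ∧ ∀ t : ℂ, ∃ S ∈ H, ∀ x, S x = x + (t * f x) • v

variable {H : Subgroup (C ≃ₗ[ℂ] C)}

lemma Tr.zero_left (f : Dual ℂ C) : Tr H 0 f :=
  ⟨map_zero f, fun _ => ⟨1, H.one_mem, fun x => by simp⟩⟩

lemma Tr.zero_right (v : C) : Tr H v 0 :=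
  ⟨by simp, fun _ => ⟨1, H.one_mem, fun x => by simp⟩⟩

lemma Tr.add_left {v w : C} {f : Dual ℂ C} (hv : Tr H v f) (hw : Tr H w f) :
    Tr H (v + w) f := by
  refine ⟨by simp [hv.1, hw.1], fun t => ?_⟩
  obtain ⟨S, hS, hSx⟩ := hv.2 t
  obtain ⟨R, hR, hRx⟩ := hw.2 t
  refine ⟨S * R, H.mul_mem hS hR, fun x => ?_⟩
  rw [LinearEquiv.mul_apply, hRx, hSx]
  simp only [map_add, map_smul, hw.1, smul_zero, add_zero]
  module

lemma Tr.smul_left {v : C} {f : Dual ℂ C} (c : ℂ) (hv : Tr H v f) : Tr H (c • v) f := by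
  refine ⟨by simp [hv.1], fun t => ?_⟩
  obtain ⟨S, hS, hSx⟩ := hv.2 (t * c)
  refine ⟨S, hS, fun x => ?_⟩
  rw [hSx]; module

lemma Tr.smul_right {v : C} {f : Dual ℂ C} (c : ℂ) (hv : Tr H v f) : Tr H v (c • f) := by
  refine ⟨by simp [hv.1], fun t => ?_⟩
  obtain ⟨S, hS, hSx⟩ := hv.2 (t * c)
  refine ⟨S, hS, fun x => ?_⟩
  rw [hSx, LinearMap.smul_apply, smul_eq_mul, mul_assoc]

lemma Tr.conj {v : C} {f g : Dual ℂ C} (hv : Tr H v f) {h : C ≃ₗ[ℂ] C} (hh : h ∈ H)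
    (hg : ∀ x, g (h x) = f x) : Tr H (h v) g := by
  refine ⟨by rw [hg, hv.1], fun t => ?_⟩
  obtain ⟨S, hS, hSx⟩ := hv.2 t
  refine ⟨h * S * h⁻¹, H.mul_mem (H.mul_mem hh hS) (H.inv_mem hh), fun x => ?_⟩
  obtain ⟨y, rfl⟩ := h.surjective x
  have : h⁻¹ (h y) = y := h.symm_apply_apply y
  rw [LinearEquiv.mul_apply, LinearEquiv.mul_apply, this, hSx, hg]
  simp

lemma Tr.comm {v w : C} {f g : Dual ℂ C} (hv : Tr H v f) (hw : Tr H w g)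
    (hfw : f w = 0) (hgv : g v ≠ 0) : Tr H w f := by
  obtain ⟨S, hS, hSx⟩ := hw.2 1
  have h1 : Tr H (S v) f := hv.conj hS (fun x => by simp [hSx, hfw])
  have h2 := (h1.add_left (hv.smul_left (-1))).smul_left (g v)⁻¹
  have : (g v)⁻¹ • (S v + (-1 : ℂ) • v) = w := by
    rw [hSx]
    have : v + (1 * g v) • w + (-1 : ℂ) • v = g v • w := by module
    rw [this, smul_smul, inv_mul_cancel₀ hgv, one_smul]
  rwa [this] at h2

lemma mem_sup_sing {F : Submodule ℂ C} {x y : C} :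
    x ∈ F ⊔ Submodule.span ℂ {y} ↔ ∃ a ∈ F, ∃ c : ℂ, a + c • y = x := by
  rw [Submodule.mem_sup]
  constructor
  · rintro ⟨a, ha, z, hz, e⟩
    obtain ⟨c, rfl⟩ := Submodule.mem_span_singleton.1 hz
    exact ⟨a, ha, c, e⟩
  · rintro ⟨a, ha, c, e⟩
    exact ⟨a, ha, _, Submodule.smul_mem _ c (Submodule.mem_span_singleton_self y), e⟩

lemma exchange {F : Submodule ℂ C} {x y : C} (hx : x ∉ F)
    (h : x ∈ F ⊔ Submodule.span ℂ {y}) : y ∈ F ⊔ Submodule.span ℂ {x} := by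
  obtain ⟨a, ha, c, e⟩ := mem_sup_sing.1 h
  have h0 : c ≠ 0 := by
    rintro rfl
    simp at e
    exact hx (e ▸ ha)
  refine mem_sup_sing.2 ⟨c⁻¹ • (-a), F.smul_mem _ (F.neg_mem ha), c⁻¹, ?_⟩
  rw [← smul_add, ← e, neg_add_cancel_left, smul_smul, inv_mul_cancel₀ h0, one_smul]

/-- move `x` to `y` fixing `F` -/
lemma move (hH : ∀ v f, f v = 0 → Tr H v f) {F : Submodule ℂ C} {x y : C}
    (hx : x ∉ F) (hy : y ∉ F ⊔ Submodule.span ℂ {x}) :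
    ∃ h ∈ H, h x = y ∧ ∀ z ∈ F, h z = z := by
  have hx' : x ∉ F ⊔ Submodule.span ℂ {y - x} := by
    intro h
    obtain ⟨a, ha, c, e⟩ := mem_sup_sing.1 (exchange hx h)
    exact hy (mem_sup_sing.2 ⟨a, ha, c + 1, by rw [add_smul, ← add_assoc, e]; simp⟩)
  obtain ⟨f, hf, hfk⟩ := Submodule.exists_le_ker_of_notMem hx'
  have h1 : f (y - x) = 0 := hfk (le_sup_right (a := F) (Submodule.mem_span_singleton_self _))
  obtain ⟨S, hS, hSx⟩ := (hH (y - x) f h1).2 (f x)⁻¹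
  refine ⟨S, hS, ?_, fun z hz => ?_⟩
  · rw [hSx, inv_mul_cancel₀ hf]; simp
  · have : f z = 0 := hfk (le_sup_left (a := F) hz)
    rw [hSx, this]; simp

lemma generation [FiniteDimensional ℂ C] (hH : ∀ v f, f v = 0 → Tr H v f)
    (hdet : ∀ S ∈ H, LinearMap.det (S : C →ₗ[ℂ] C) = 1) :
    ∀ d : ℕ, ∀ (F : Submodule ℂ C), finrank ℂ C = finrank ℂ F + d →
      ∀ T : C ≃ₗ[ℂ] C, LinearMap.det (T : C →ₗ[ℂ] C) = 1 → (∀ z ∈ F, T z = z) → T ∈ H := by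
  intro d
  induction d with
  | zero =>
    intro F hF T _ hT
    have : F = ⊤ := Submodule.eq_top_of_finrank_eq (by omega)
    have : T = 1 := by ext x; exact hT x (this ▸ Submodule.mem_top)
    rw [this]; exact H.one_mem
  | succ d ih =>
    intro F hF T hTdet hT
    have hFt : F ≠ ⊤ := by
      rintro rfl
      rw [finrank_top] at hF
      omega
    obtain ⟨x, hx⟩ : ∃ x, x ∉ F := by
      by_contra! h
      exact hFt (eq_top_iff.2 fun z _ => h z)
    have hxr := Submodule.finrank_sup_span_singleton hx
    have hy : T x ∉ F := fun h => hx (by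
      have := T.injective (hT _ h)
      rwa [this] at h)
    have hyr := Submodule.finrank_sup_span_singleton hy
    rcases Nat.eq_zero_or_pos d with rfl | hd
    · have htop : F ⊔ Submodule.span ℂ {x} = ⊤ := Submodule.eq_top_of_finrank_eq (by omega)
      obtain ⟨f, hf, hfk⟩ := Submodule.exists_le_ker_of_notMem hx
      have key : ∀ y, T y = y + f y • ((f x)⁻¹ • (T x - x)) := by
        intro y
        have : y ∈ F ⊔ Submodule.span ℂ {x} := htop ▸ Submodule.mem_top
        obtain ⟨a, ha, c, rfl⟩ := mem_sup_sing.1 this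
        have h1 : f a = 0 := hfk ha
        rw [map_add, map_smul, hT a ha, map_add, map_smul, h1, zero_add, smul_smul, smul_eq_mul,
          mul_assoc, mul_inv_cancel₀ hf, mul_one]
        module
      have h2 : (T : C →ₗ[ℂ] C) = LinearMap.transvection f ((f x)⁻¹ • (T x - x)) := by
        ext y
        rw [LinearMap.transvection.apply, LinearEquiv.coe_coe, key]
      have h3 : f ((f x)⁻¹ • (T x - x)) = 0 := by
        rw [h2, LinearMap.transvection.det] at hTdet
        simpa using hTdet
      obtain ⟨S, hS, hSx⟩ := (hH _ f h3).2 1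
      have : T = S := by ext y; rw [key, hSx, one_mul]
      rwa [this]
    · obtain ⟨h, hh, hhx, hhF⟩ : ∃ h ∈ H, h (T x) = x ∧ ∀ z ∈ F, h z = z := by
        by_cases hc : x ∈ F ⊔ Submodule.span ℂ {T x}
        · obtain ⟨z, hz⟩ : ∃ z, z ∉ F ⊔ Submodule.span ℂ {T x} := by
            by_contra! h
            have : F ⊔ Submodule.span ℂ {T x} = ⊤ := eq_top_iff.2 fun z _ => h z
            rw [this, finrank_top] at hyr
            omega
          obtain ⟨h1, hh1, e1, f1⟩ := move hH hy hz
          have hzF : z ∉ F := fun h => hz (le_sup_left (a := F) h)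
          have hxz : x ∉ F ⊔ Submodule.span ℂ {z} := fun h => hz (by
            refine (sup_le le_sup_left ?_ : F ⊔ Submodule.span ℂ {x} ≤ _) (exchange hx h)
            rwa [Submodule.span_singleton_le_iff_mem])
          obtain ⟨h2, hh2, e2, f2⟩ := move hH hzF hxz
          refine ⟨h2 * h1, H.mul_mem hh2 hh1, ?_, fun w hw => ?_⟩
          · rw [LinearEquiv.mul_apply, e1, e2]
          · rw [LinearEquiv.mul_apply, f1 w hw, f2 w hw]
        · exact move hH hy hc
      have := ih (F ⊔ Submodule.span ℂ {x}) (by omega) (h * T) (by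
          have e : ((h * T : C ≃ₗ[ℂ] C) : C →ₗ[ℂ] C) = (h : C →ₗ[ℂ] C) * (T : C →ₗ[ℂ] C) := rfl
          rw [e, map_mul, hTdet, hdet h hh, one_mul]) (by
          intro z hz
          obtain ⟨a, ha, c, rfl⟩ := mem_sup_sing.1 hz
          rw [LinearEquiv.mul_apply, map_add, map_add, hT a ha, hhF a ha, map_smul, map_smul, hhx])
      exact (H.mul_mem_cancel_left hh).1 this

lemma exists_trans [FiniteDimensional ℂ C] {A B : Submodule ℂ C}
    (hH : ∀ S : C ≃ₗ[ℂ] C, LinearMap.det (S : C →ₗ[ℂ] C) = 1 → A.map (S : C →ₗ[ℂ] C) = A →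
      (∀ b ∈ B, S b = b) → S ∈ H) {v : C} {f : Dual ℂ C} (hv : v ∈ A) (hf : ∀ b ∈ B, f b = 0)
    (hfv : f v = 0) : Tr H v f := by
  refine ⟨hfv, fun t => ?_⟩
  have h0 : (t • f) v = 0 := by simp [hfv]
  refine ⟨LinearEquiv.transvection h0, hH _ ?_ ?_ ?_, fun x => ?_⟩
  · rw [LinearEquiv.transvection.coe_toLinearMap, LinearMap.transvection.det, h0, add_zero]
  · refine Submodule.eq_of_le_of_finrank_eq ?_ (LinearEquiv.finrank_map_eq _ _)
    rintro _ ⟨a, ha, rfl⟩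
    simp only [LinearEquiv.coe_coe, LinearEquiv.transvection.apply]
    exact A.add_mem ha (A.smul_mem _ hv)
  · intro b hb
    rw [← LinearEquiv.coe_coe, LinearEquiv.transvection.coe_toLinearMap, LinearMap.transvection.apply]
    simp [hf b hb]
  · rw [← LinearEquiv.coe_coe, LinearEquiv.transvection.coe_toLinearMap, LinearMap.transvection.apply]
    simp

/-- Invariant subspaces meeting `A` contain `A`. -/
lemma le_of_inv {A B : Submodule ℂ C} (hAB : IsCompl A B)
    {U : Submodule ℂ C} (hU : ∀ v ∈ A, ∀ f : Dual ℂ C, (∀ b ∈ B, f b = 0) → f v = 0 →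
      ∀ x ∈ U, x + f x • v ∈ U)
    {a : C} (ha : a ∈ A) (ha0 : a ≠ 0) (haU : a ∈ U) : A ≤ U := by
  intro a' ha'
  by_cases h : a ∈ B ⊔ Submodule.span ℂ {a' - a}
  · obtain ⟨b, hb, c, e⟩ := mem_sup_sing.1 h
    have hbA : b ∈ A := by
      have : b = a - c • (a' - a) := by nth_rewrite 1 [← e]; simp
      rw [this]; exact A.sub_mem ha (A.smul_mem _ (A.sub_mem ha' ha))
    have hb0 : b = 0 := by
      have := hAB.disjoint.le_bot ⟨hbA, hb⟩
      simpa using this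
    rw [hb0, zero_add] at e
    have hc : c ≠ 0 := by rintro rfl; exact ha0 (by simpa using e.symm)
    have : a' = a + c⁻¹ • a := by
      nth_rewrite 2 [← e]
      rw [smul_smul, inv_mul_cancel₀ hc, one_smul]; simp
    rw [this]
    exact U.add_mem haU (U.smul_mem _ haU)
  · obtain ⟨f, hf, hfk⟩ := Submodule.exists_le_ker_of_notMem h
    have h1 : f (a' - a) = 0 := hfk (le_sup_right (a := B) (Submodule.mem_span_singleton_self _))
    have h2 : ∀ b ∈ B, f b = 0 := fun b hb => hfk (le_sup_left (a := B) hb)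
    have := hU ((f a)⁻¹ • (a' - a)) (A.smul_mem _ (A.sub_mem ha' ha)) f h2 (by simp [h1]) a haU
    rw [smul_smul, mul_inv_cancel₀ hf, one_smul] at this
    simpa using this

lemma decomp {A B : Submodule ℂ C} (hAB : IsCompl A B) (x : C) :
    ∃ a ∈ A, ∃ b ∈ B, a + b = x := by
  have : x ∈ A ⊔ B := hAB.sup_eq_top ▸ Submodule.mem_top
  exact Submodule.mem_sup.1 this

lemma disj {A B : Submodule ℂ C} (hAB : IsCompl A B) {x : C} (ha : x ∈ A) (hb : x ∈ B) :
    x = 0 := by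
  have := hAB.disjoint.le_bot ⟨ha, hb⟩
  simpa using this

lemma map_eq_of_le [FiniteDimensional ℂ C] {A : Submodule ℂ C} (W : C ≃ₗ[ℂ] C)
    (h : ∀ x ∈ A, W x ∈ A) : A.map (W : C →ₗ[ℂ] C) = A := by
  refine Submodule.eq_of_le_of_finrank_eq ?_ (LinearEquiv.finrank_map_eq _ _)
  rintro _ ⟨a, ha, rfl⟩
  exact h a ha

lemma irred [FiniteDimensional ℂ C] {A B : Submodule ℂ C} (hAB : IsCompl A B)
    (hB2 : 2 ≤ finrank ℂ B)
    (hTA : ∀ v ∈ A, ∀ f : Dual ℂ C, (∀ b ∈ B, f b = 0) → f v = 0 → Tr H v f)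
    (hTB : ∀ v ∈ B, ∀ f : Dual ℂ C, (∀ a ∈ A, f a = 0) → f v = 0 → Tr H v f)
    {W : C ≃ₗ[ℂ] C} (hW : W ∈ H)
    (hWA : A.map (W : C →ₗ[ℂ] C) ≠ A) (hWB : B.map (W : C →ₗ[ℂ] C) ≠ B)
    {U : Submodule ℂ C} (hU : ∀ h ∈ H, ∀ x ∈ U, h x ∈ U) (hUt : U ≠ ⊤) : U = ⊥ := by
  have hTU : ∀ v f, Tr H v f → ∀ x ∈ U, x + f x • v ∈ U := by
    intro v f h x hx
    obtain ⟨S, hS, hSx⟩ := h.2 1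
    have := hU S hS x hx
    rwa [hSx, one_mul] at this
  have hA' : ∀ a ∈ A, a ≠ 0 → a ∈ U → A ≤ U := fun a ha h0 haU =>
    le_of_inv hAB (fun v hv f hf hfv => hTU v f (hTA v hv f hf hfv)) ha h0 haU
  have hB' : ∀ b ∈ B, b ≠ 0 → b ∈ U → B ≤ U := fun a ha h0 haU =>
    le_of_inv hAB.symm (fun v hv f hf hfv => hTU v f (hTB v hv f hf hfv)) ha h0 haU
  by_cases hBU : B ≤ U
  · exfalso
    have hUB : U ≤ B := by
      intro x hx
      obtain ⟨a, ha, b, hb, rfl⟩ := decomp hAB x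
      have haU : a ∈ U := (U.add_mem_iff_left (hBU hb)).1 hx
      by_cases h0 : a = 0
      · rw [h0, zero_add]; exact hb
      · exact absurd (eq_top_iff.2 (hAB.sup_eq_top ▸ sup_le (hA' a ha h0 haU) hBU)) hUt
    have : U = B := le_antisymm hUB hBU
    subst this
    exact hWB (map_eq_of_le W (hU W hW))
  · have hUA : U ≤ A := by
      intro x hx
      obtain ⟨a, ha, b, hb, rfl⟩ := decomp hAB x
      by_cases h0 : b = 0
      · rw [h0, add_zero]; exact ha
      exfalso
      obtain ⟨v, hvB, hv⟩ : ∃ v ∈ B, v ∉ Submodule.span ℂ {b} := by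
        by_contra! h
        have h1 := Submodule.finrank_mono (show B ≤ Submodule.span ℂ {b} from h)
        rw [finrank_span_singleton h0] at h1
        omega
      have hv0 : v ≠ 0 := by rintro rfl; exact hv (Submodule.zero_mem _)
      have hbn : b ∉ A ⊔ Submodule.span ℂ {v} := by
        intro h
        obtain ⟨a', ha', c, e⟩ := mem_sup_sing.1 (exchange (fun h => h0 (disj hAB h hb)) h)
        have ha'B : a' ∈ B := by
          have : a' = v - c • b := by rw [← e]; simp
          rw [this]; exact B.sub_mem hvB (B.smul_mem _ hb)
        rw [disj hAB ha' ha'B, zero_add] at e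
        exact hv (Submodule.mem_span_singleton.2 ⟨c, e⟩)
      obtain ⟨f, hf, hfk⟩ := Submodule.exists_le_ker_of_notMem hbn
      have h1 : f v = 0 := hfk (le_sup_right (a := A) (Submodule.mem_span_singleton_self _))
      have h2 : ∀ a ∈ A, f a = 0 := fun b hb => hfk (le_sup_left (a := A) hb)
      have h3 := hTU v f (hTB v hvB f h2 h1) _ hx
      rw [U.add_mem_iff_right hx, map_add, h2 a ha, zero_add, U.smul_mem_iff hf] at h3
      exact hBU (hB' v hvB hv0 h3)
    by_contra hne
    obtain ⟨a, haU, ha0⟩ := Submodule.exists_mem_ne_zero_of_ne_bot hne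
    have : U = A := le_antisymm hUA (hA' a (hUA haU) ha0 haU)
    subst this
    exact hWA (map_eq_of_le W (hU W hW))

/-- If one transvection with hyperplane `ker f ⊇ A` leaves `B`, then all do. -/
lemma full_ker {A B : Submodule ℂ C} (hAB : IsCompl A B)
    (hTA : ∀ v ∈ A, ∀ f : Dual ℂ C, (∀ b ∈ B, f b = 0) → f v = 0 → Tr H v f)
    (hTB : ∀ v ∈ B, ∀ f : Dual ℂ C, (∀ a ∈ A, f a = 0) → f v = 0 → Tr H v f)
    {f : Dual ℂ C} (hf : ∀ a ∈ A, f a = 0) {w : C} (hw : w ∉ B) (hT : Tr H w f) :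
    ∀ v, f v = 0 → Tr H v f := by
  let V : Submodule ℂ C :=
    { carrier := {v | Tr H v f}
      add_mem' := fun h1 h2 => Tr.add_left h1 h2
      zero_mem' := Tr.zero_left f
      smul_mem' := fun c _ h => Tr.smul_left c h }
  have hBV : ∀ b ∈ B, f b = 0 → b ∈ V := fun b hb h => hTB b hb f hf h
  have hwV : w ∈ V := hT
  obtain ⟨a, ha, b, hb, rfl⟩ := decomp hAB w
  have hfb : f b = 0 := by
    have := hT.1
    rwa [map_add, hf a ha, zero_add] at this
  have haV : a ∈ V := (V.add_mem_iff_left (hBV b hb hfb)).1 hwV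
  have ha0 : a ≠ 0 := by
    rintro rfl
    rw [zero_add] at hw
    exact hw hb
  have hAV : A ≤ V := by
    refine le_of_inv hAB ?_ ha ha0 haV
    intro v hv g hg hgv x hx
    obtain ⟨S, hS, hSx⟩ := (hTA v hv g hg hgv).2 1
    have : Tr H (S x) f := Tr.conj hx hS (fun y => by simp [hSx, hf v hv])
    rw [hSx, one_mul] at this
    exact this
  intro v hv
  obtain ⟨a', ha', b', hb', rfl⟩ := decomp hAB v
  rw [map_add, hf a' ha', zero_add] at hv
  exact V.add_mem (hAV ha') (hBV b' hb' hv)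

lemma all_trans [FiniteDimensional ℂ C] {A B : Submodule ℂ C} (hAB : IsCompl A B)
    (hB2 : 2 ≤ finrank ℂ B)
    (hTA : ∀ v ∈ A, ∀ f : Dual ℂ C, (∀ b ∈ B, f b = 0) → f v = 0 → Tr H v f)
    (hTB : ∀ v ∈ B, ∀ f : Dual ℂ C, (∀ a ∈ A, f a = 0) → f v = 0 → Tr H v f)
    {W : C ≃ₗ[ℂ] C} (hW : W ∈ H)
    (hWA : A.map (W : C →ₗ[ℂ] C) ≠ A) (hWB : B.map (W : C →ₗ[ℂ] C) ≠ B)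
    {f : Dual ℂ C} (hf0 : f ≠ 0) (hf : ∀ v, f v = 0 → Tr H v f) :
    ∀ v f, f v = 0 → Tr H v f := by
  have hsm : ∀ (c : ℂ) (f : Dual ℂ C), (∀ v, f v = 0 → Tr H v f) →
      ∀ v, (c • f) v = 0 → Tr H v (c • f) := by
    intro c f hf v hv
    by_cases hc : c = 0
    · rw [hc, zero_smul]; exact Tr.zero_right v
    · refine Tr.smul_right c (hf v ?_)
      simpa [hc] using hv
  have hconj : ∀ h ∈ H, ∀ f g : Dual ℂ C, (∀ x, g (h x) = f x) → (∀ v, f v = 0 → Tr H v f) →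
      ∀ v, g v = 0 → Tr H v g := by
    intro h hh f g hg hf v hv
    obtain ⟨y, rfl⟩ := h.surjective v
    exact (hf y (by rw [← hg, hv])).conj hh hg
  let P : Submodule ℂ (Dual ℂ C) :=
    { carrier := {f | ∀ v, f v = 0 → Tr H v f}
      zero_mem' := fun v _ => Tr.zero_right v
      smul_mem' := fun c f h => hsm c f h
      add_mem' := by
        intro f g hf hg
        by_cases hex : ∃ v, g v = 0 ∧ f v ≠ 0
        · obtain ⟨v, hgv, hfv⟩ := hex
          obtain ⟨S, hS, hSx⟩ := (hg v hgv).2 (-(f v)⁻¹)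
          refine hconj S hS f (f + g) (fun x => ?_) hf
          rw [hSx]
          simp only [LinearMap.add_apply, map_add, map_smul, hgv, smul_eq_mul]
          field_simp
          ring
        · push Not at hex
          by_cases hg0 : ∃ u, g u ≠ 0
          · obtain ⟨u, hu⟩ := hg0
            have : f + g = (f u / g u + 1) • g := by
              ext x
              have := hex (x - (g x / g u) • u) (by simp [hu])
              simp only [map_sub, map_smul, smul_eq_mul, sub_eq_zero] at this
              simp only [LinearMap.add_apply, LinearMap.smul_apply, smul_eq_mul, this]
              field_simp
            rw [this]
            exact hsm _ g hg
          · push Not at hg0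
            have : g = 0 := by ext x; simpa using hg0 x
            rw [this, add_zero]; exact hf }
  have hfP : f ∈ P := hf
  have hbot : P.dualCoannihilator = ⊥ := by
    refine irred hAB hB2 hTA hTB hW hWA hWB ?_ ?_
    · intro h hh x hx
      rw [Submodule.mem_dualCoannihilator] at hx ⊢
      intro g hg
      have := hx (g ∘ₗ (h : C →ₗ[ℂ] C)) (by
        refine hconj h⁻¹ (H.inv_mem hh) g _ (fun y => ?_) hg
        simp)
      simpa using this
    · intro htop
      apply hf0
      ext x
      have : x ∈ P.dualCoannihilator := htop ▸ Submodule.mem_top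
      exact (Submodule.mem_dualCoannihilator _).1 this f hfP
  have hPtop : P = ⊤ := by
    rw [← Subspace.dualCoannihilator_dualAnnihilator_eq (W := P), hbot]
    simp
  intro v g hg
  have : g ∈ P := hPtop ▸ Submodule.mem_top
  exact this v hg

lemma find_vectors [FiniteDimensional ℂ C] {A B A' B' : Submodule ℂ C} (hAB : IsCompl A B)
    (hAB' : IsCompl A' B') (hA : 1 ≤ finrank ℂ A) (hdim : finrank ℂ A < finrank ℂ B)
    (hrA : finrank ℂ A' = finrank ℂ A) (hrB : finrank ℂ B' = finrank ℂ B)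
    (hnA : A' ≠ A) (hnB : B' ≠ B) :
    ∃ w ∈ B', w ∉ B ∧ ∃ v ∈ B, v ∉ A' ⊔ Submodule.span ℂ {w} ∧
      A ⊔ Submodule.span ℂ {w} ⊔ Submodule.span ℂ {v} ≠ ⊤ := by
  have hsum := Submodule.finrank_add_eq_of_isCompl hAB
  have hle : ∀ (D : Submodule ℂ C) (x : C),
      finrank ℂ (D ⊔ Submodule.span ℂ {x} : Submodule ℂ C) ≤ finrank ℂ D + 1 := by
    intro D x
    by_cases h : x ∈ D
    · rw [sup_eq_left.2 ((Submodule.span_singleton_le_iff_mem _ _).2 h)]; omega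
    · rw [Submodule.finrank_sup_span_singleton h]
  obtain ⟨w, hwB', hw⟩ : ∃ w ∈ B', w ∉ B := by
    by_contra! h
    exact hnB (Submodule.eq_of_le_of_finrank_eq h hrB)
  by_cases hk : 3 ≤ finrank ℂ B
  · obtain ⟨v, hvB, hv⟩ : ∃ v ∈ B, v ∉ A' ⊔ Submodule.span ℂ {w} := by
      by_contra! h
      have h1 : B = A' ⊔ Submodule.span ℂ {w} :=
        Submodule.eq_of_le_of_finrank_le h ((hle _ _).trans (by omega))
      exact hw (h1 ▸ le_sup_right (a := A') (Submodule.mem_span_singleton_self _))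
    refine ⟨w, hwB', hw, v, hvB, hv, fun h => ?_⟩
    have h1 := hle (A ⊔ Submodule.span ℂ {w}) v
    have h2 := hle A w
    rw [h, finrank_top] at h1
    omega
  · have hA1 : finrank ℂ A = 1 := by omega
    have hB2 : finrank ℂ B = 2 := by omega
    obtain ⟨w0, hw0, hw00⟩ : ∃ w0 ∈ B ⊓ B', w0 ≠ 0 := by
      apply Submodule.exists_mem_ne_zero_of_ne_bot
      intro h
      have h1 := Submodule.finrank_sup_add_finrank_inf_eq B B'
      have h2 := Submodule.finrank_le (B ⊔ B')
      rw [h, finrank_bot] at h1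
      omega
    obtain ⟨a, ha, b, hb, rfl⟩ := decomp hAB w
    have ha0 : a ≠ 0 := by
      rintro rfl
      rw [zero_add] at hw
      exact hw hb
    have hnt : ∀ b', A ⊔ Submodule.span ℂ {a + b'} ⊔ Submodule.span ℂ {b'} ≠ ⊤ := by
      intro b' h
      have h1 : A ⊔ Submodule.span ℂ {a + b'} ⊔ Submodule.span ℂ {b'} ≤
          A ⊔ Submodule.span ℂ {b'} := by
        refine sup_le (sup_le le_sup_left ?_) le_sup_right
        rw [Submodule.span_singleton_le_iff_mem]
        exact Submodule.add_mem_sup ha (Submodule.mem_span_singleton_self _)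
      have h2 := Submodule.finrank_mono h1
      have h3 := hle A b'
      rw [h, finrank_top] at h2
      omega
    by_cases c1 : b ∈ A' ⊔ Submodule.span ℂ {a + b}
    · by_cases c2 : b + w0 ∈ A' ⊔ Submodule.span ℂ {a + (b + w0)}
      · exfalso
        obtain ⟨u, hu, s, e1⟩ := mem_sup_sing.1 c1
        obtain ⟨u', hu', t, e2⟩ := mem_sup_sing.1 c2
        have e3 : u' - u = (s - 1) • (a + b) - (t - 1) • (a + (b + w0)) := by
          have e1' : u = b - s • (a + b) := by rw [eq_sub_iff_add_eq, e1]
          have e2' : u' = b + w0 - t • (a + (b + w0)) := by rw [eq_sub_iff_add_eq, e2]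
          rw [e1', e2']; module
        have hz : u' - u = 0 := by
          refine disj hAB' (A'.sub_mem hu' hu) ?_
          rw [e3, ← add_assoc]
          exact B'.sub_mem (B'.smul_mem _ hwB') (B'.smul_mem _ (B'.add_mem hwB' hw0.2))
        rw [hz] at e3
        have e4 : (s - t) • (a + b) = (t - 1) • w0 := by
          rw [← sub_eq_zero, e3]; module
        have hst : s - t = 0 := by
          by_contra hne
          apply hw
          rw [← B.smul_mem_iff hne, e4]
          exact B.smul_mem _ hw0.1
        rw [hst, zero_smul] at e4
        have ht : t - 1 = 0 := by
          rcases smul_eq_zero.1 e4.symm with h | h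
          · exact h
          · exact absurd h hw00
        have hs1 : s = 1 := by linear_combination hst + ht
        rw [hs1, one_smul] at e1
        have haA' : a ∈ A' := by
          have : a = -u := by
            rw [eq_neg_iff_add_eq_zero]
            have : u + a + b = 0 + b := by rw [add_assoc, e1, zero_add]
            rw [add_comm]; exact add_right_cancel this
          rw [this]; exact A'.neg_mem hu
        have s1 : Submodule.span ℂ {a} = A := Submodule.eq_of_le_of_finrank_eq
          ((Submodule.span_singleton_le_iff_mem _ _).2 ha) (by rw [finrank_span_singleton ha0, hA1])
        have s2 : Submodule.span ℂ {a} = A' := Submodule.eq_of_le_of_finrank_eq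
          ((Submodule.span_singleton_le_iff_mem _ _).2 haA')
          (by rw [finrank_span_singleton ha0, hrA, hA1])
        exact hnA (s2.symm.trans s1)
      · refine ⟨a + (b + w0), ?_, ?_, b + w0, B.add_mem hb hw0.1, c2, hnt _⟩
        · rw [← add_assoc]; exact B'.add_mem hwB' hw0.2
        · rw [← add_assoc, B.add_mem_iff_left hw0.1]; exact hw
    · exact ⟨a + b, hwB', hw, b, hb, c1, hnt _⟩

lemma core [FiniteDimensional ℂ C] {A B : Submodule ℂ C} (hAB : IsCompl A B)
    (hdim : finrank ℂ A < finrank ℂ B) (hA : 1 ≤ finrank ℂ A)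
    (hTA : ∀ v ∈ A, ∀ f : Dual ℂ C, (∀ b ∈ B, f b = 0) → f v = 0 → Tr H v f)
    (hTB : ∀ v ∈ B, ∀ f : Dual ℂ C, (∀ a ∈ A, f a = 0) → f v = 0 → Tr H v f)
    {W : C ≃ₗ[ℂ] C} (hW : W ∈ H)
    (hWA : A.map (W : C →ₗ[ℂ] C) ≠ A) (hWB : B.map (W : C →ₗ[ℂ] C) ≠ B) :
    ∀ v f, f v = 0 → Tr H v f := by
  have hAB' : IsCompl (A.map (W : C →ₗ[ℂ] C)) (B.map (W : C →ₗ[ℂ] C)) := by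
    constructor
    · rw [Submodule.disjoint_def]
      rintro _ ⟨a, ha, rfl⟩ ⟨b, hb, e⟩
      have : b = a := W.injective e
      subst this
      rw [disj hAB ha hb, map_zero]
    · rw [codisjoint_iff, ← Submodule.map_sup, hAB.sup_eq_top, Submodule.map_top]
      exact LinearEquiv.range W
  obtain ⟨w, hwB', hw, v, hvB, hv, ht⟩ := find_vectors hAB hAB' hA hdim
    (LinearEquiv.finrank_map_eq _ _) (LinearEquiv.finrank_map_eq _ _) hWA hWB
  obtain ⟨f, hf0, hfk⟩ := Submodule.exists_le_ker_of_lt_top _ (lt_top_iff_ne_top.2 ht)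
  obtain ⟨g, hg0, hgk⟩ := Submodule.exists_le_ker_of_notMem hv
  have hfA : ∀ a ∈ A, f a = 0 := fun a ha =>
    hfk ((le_sup_left.trans le_sup_left : A ≤ A ⊔ _ ⊔ _) ha)
  have hfw : f w = 0 := hfk ((le_sup_right.trans le_sup_left : _ ≤ A ⊔ _ ⊔ _)
    (Submodule.mem_span_singleton_self w))
  have hfv : f v = 0 := hfk ((le_sup_right : _ ≤ A ⊔ _ ⊔ _) (Submodule.mem_span_singleton_self v))
  have hgA : ∀ a ∈ A, g (W a) = 0 := fun a ha =>
    hgk ((le_sup_left : _ ≤ A.map (W : C →ₗ[ℂ] C) ⊔ _) (Submodule.mem_map_of_mem ha))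
  have hgw : g w = 0 := hgk ((le_sup_right : _ ≤ A.map (W : C →ₗ[ℂ] C) ⊔ _)
    (Submodule.mem_span_singleton_self w))
  have hTw : Tr H w g := by
    obtain ⟨b, hb, rfl⟩ := hwB'
    exact (hTB b hb (g ∘ₗ (W : C →ₗ[ℂ] C)) (fun a ha => hgA a ha) hgw).conj hW (fun x => rfl)
  have hTwf : Tr H w f := (hTB v hvB f hfA hfv).comm hTw hfw hg0
  exact all_trans hAB (by omega) hTA hTB hW hWA hWB hf0 (full_ker hAB hTA hTB hfA hw hTwf)

end Bridge

/-- Non-unitary Bridge lemma: for `C = A ⊕ B` with `dim B > dim A ≥ 1` and a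
determinant-one bridge `W` (with `W(A) ≠ A`, `W(B) ≠ B`), the subgroup generated by
the determinant-one automorphisms supported on `A`, those supported on `B`, and `W`
is exactly the group of all determinant-one automorphisms of `C`. -/
theorem stmt10 {C : Type*} [AddCommGroup C] [Module ℂ C] [FiniteDimensional ℂ C]
    (A B : Submodule ℂ C) (hAB : IsCompl A B)
    (hdim : Module.finrank ℂ A < Module.finrank ℂ B) (hA : 1 ≤ Module.finrank ℂ A)
    (W : C ≃ₗ[ℂ] C) (hWdet : LinearMap.det (W : C →ₗ[ℂ] C) = 1)
    (hWA : A.map (W : C →ₗ[ℂ] C) ≠ A) (hWB : B.map (W : C →ₗ[ℂ] C) ≠ B) :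
    ∀ T : C ≃ₗ[ℂ] C,
      T ∈ Subgroup.closure
          ({S : C ≃ₗ[ℂ] C | LinearMap.det (S : C →ₗ[ℂ] C) = 1 ∧
              A.map (S : C →ₗ[ℂ] C) = A ∧ ∀ b ∈ B, S b = b} ∪
            {S : C ≃ₗ[ℂ] C | LinearMap.det (S : C →ₗ[ℂ] C) = 1 ∧
              B.map (S : C →ₗ[ℂ] C) = B ∧ ∀ a ∈ A, S a = a} ∪
            {W}) ↔
        LinearMap.det (T : C →ₗ[ℂ] C) = 1 := by
  intro T
  set X : Set (C ≃ₗ[ℂ] C) :=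
    {S : C ≃ₗ[ℂ] C | LinearMap.det (S : C →ₗ[ℂ] C) = 1 ∧
        A.map (S : C →ₗ[ℂ] C) = A ∧ ∀ b ∈ B, S b = b} ∪
      {S : C ≃ₗ[ℂ] C | LinearMap.det (S : C →ₗ[ℂ] C) = 1 ∧
        B.map (S : C →ₗ[ℂ] C) = B ∧ ∀ a ∈ A, S a = a} ∪ {W} with hX
  have hdet : ∀ S ∈ Subgroup.closure X, LinearMap.det (S : C →ₗ[ℂ] C) = 1 := by
    have hle : ∀ S : C ≃ₗ[ℂ] C, S ∈ (LinearEquiv.det (R := ℂ) (M := C)).ker ↔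
        LinearMap.det (S : C →ₗ[ℂ] C) = 1 := by
      intro S
      rw [MonoidHom.mem_ker, ← Units.val_inj, LinearEquiv.coe_det, Units.val_one]
    intro S hS
    rw [← hle]
    refine (Subgroup.closure_le _).2 ?_ hS
    rintro S ((hS | hS) | hS)
    · exact (hle S).2 hS.1
    · exact (hle S).2 hS.1
    · rw [Set.mem_singleton_iff.1 hS]; exact (hle W).2 hWdet
  refine ⟨hdet T, fun hT => ?_⟩
  have hall : ∀ v f, f v = 0 → Bridge.Tr (Subgroup.closure X) v f := by
    refine Bridge.core hAB hdim hA ?_ ?_ (W := W)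
      (Subgroup.subset_closure (Or.inr rfl)) hWA hWB
    · intro v hv f hf hfv
      exact Bridge.exists_trans (fun S h1 h2 h3 =>
        Subgroup.subset_closure (Or.inl (Or.inl ⟨h1, h2, h3⟩))) hv hf hfv
    · intro v hv f hf hfv
      exact Bridge.exists_trans (fun S h1 h2 h3 =>
        Subgroup.subset_closure (Or.inl (Or.inr ⟨h1, h2, h3⟩))) hv hf hfv
  refine Bridge.generation hall hdet (Module.finrank ℂ C) ⊥ (by simp) T hT ?_
  intro z hz
  rw [(Submodule.mem_bot ℂ).1 hz, map_zero]
end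

section
/- Let C be a finite-dimensional complex vector space and let A, B be subspaces with C = A ⊕ B (internal direct sum) and dim B > dim A ≥ 1. Let W be a linear automorphism of C with det W = 1, W(A) ≠ A and W(B) ≠ B. Let G_A be the set of linear automorphisms T of C with det T = 1, T(A) = A, and T(b) = b for all b ∈ B; let G_B be the set of linear automorphisms T with det T = 1, T(B) = B, and T(a) = a for all a ∈ A. Then the subgroup Γ generated by G_A ∪ G_B ∪ {W} acts transitively on C \ {0}: for all nonzero vectors ψ, φ ∈ C there exists T ∈ Γ with T(ψ) = φ. -/
theorem aux_step {C : Type*} [AddCommGroup C] [Module ℂ C] [FiniteDimensional ℂ C]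
    (A B : Submodule ℂ C) (hAB : IsCompl A B) (v w : C) (hv : v ∈ B) (hw : w ∈ B)
    (hli : LinearIndependent ℂ ![v, w]) :
    ∃ S : C ≃ₗ[ℂ] C, (LinearMap.det (S : C →ₗ[ℂ] C) = 1 ∧
      B.map (S : C →ₗ[ℂ] C) = B ∧ ∀ a ∈ A, S a = a) ∧ S v = w := by
  rw [LinearIndependent.pair_iff] at hli
  have hnot : v ∉ A ⊔ Submodule.span ℂ {w - v} := by
    intro h
    obtain ⟨a, ha, y, hy, hs⟩ := Submodule.mem_sup.1 h
    obtain ⟨t, rfl⟩ := Submodule.mem_span_singleton.1 hy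
    have haB : a ∈ B := by
      have : a = v - t • (w - v) := eq_sub_of_add_eq hs
      rw [this]
      exact B.sub_mem hv (B.smul_mem _ (B.sub_mem hw hv))
    have ha0 : a = 0 := Submodule.disjoint_def.1 hAB.disjoint a ha haB
    rw [ha0] at hs
    have := hli (1 + t) (-t) (by
      have h2 : (1 + t) • v + (-t) • w = v - (0 + t • (w - v)) := by module
      rw [h2, hs, sub_self])
    have h1 := this.1
    have h2 := this.2
    have h3 : t = 0 := by simpa using h2
    rw [h3] at h1
    norm_num at h1
  obtain ⟨g, hg, hk⟩ := Submodule.exists_le_ker_of_notMem hnot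
  let f : Module.Dual ℂ C := (g v)⁻¹ • g
  have hfv : f v = 1 := by simp [f, hg]
  have hgw : g (w - v) = 0 :=
    hk (Submodule.mem_sup_right (Submodule.mem_span_singleton_self _))
  have hfw : f (w - v) = 0 := by
    change (g v)⁻¹ • g (w - v) = 0
    rw [hgw, smul_zero]
  have hfA : ∀ a ∈ A, f a = 0 := by
    intro a ha
    have : g a = 0 := hk (Submodule.mem_sup_left ha)
    change (g v)⁻¹ • g a = 0
    rw [this, smul_zero]
  refine ⟨LinearEquiv.transvection hfw, ⟨?_, ?_, ?_⟩, ?_⟩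
  · have h2 := congrArg Units.val (LinearEquiv.transvection.det_eq_one hfw)
    rw [LinearEquiv.coe_det] at h2
    exact h2
  · refine Submodule.eq_of_le_of_finrank_eq ?_ (LinearEquiv.finrank_map_eq _ _)
    rintro _ ⟨x, hx, rfl⟩
    change x + f x • (w - v) ∈ B
    exact B.add_mem hx (B.smul_mem _ (B.sub_mem hw hv))
  · intro a ha
    change a + f a • (w - v) = a
    rw [hfA a ha]; simp
  · change v + f v • (w - v) = w
    rw [hfv]; simp

theorem aux_trans {C : Type*} [AddCommGroup C] [Module ℂ C] [FiniteDimensional ℂ C]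
    (A B : Submodule ℂ C) (hAB : IsCompl A B) (hB : 1 < Module.finrank ℂ B)
    (H : Subgroup (C ≃ₗ[ℂ] C))
    (hH : ∀ S : C ≃ₗ[ℂ] C, (LinearMap.det (S : C →ₗ[ℂ] C) = 1 ∧
      B.map (S : C →ₗ[ℂ] C) = B ∧ ∀ a ∈ A, S a = a) → S ∈ H)
    (v w : C) (hv : v ∈ B) (hw : w ∈ B) (hv0 : v ≠ 0) (hw0 : w ≠ 0) :
    ∃ S ∈ H, (∀ a ∈ A, S a = a) ∧ S v = w := by
  by_cases hli : LinearIndependent ℂ ![v, w]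
  · obtain ⟨S, hS, hSv⟩ := aux_step A B hAB v w hv hw hli
    exact ⟨S, hH S hS, hS.2.2, hSv⟩
  · have hv0' : (⟨v, hv⟩ : B) ≠ 0 := by simpa [Subtype.ext_iff] using hv0
    obtain ⟨⟨u, hu⟩, hlu⟩ := exists_linearIndependent_pair_of_one_lt_finrank hB hv0'
    have hvu : LinearIndependent ℂ ![v, u] := by
      rw [LinearIndependent.pair_iff] at hlu ⊢
      intro s t hst
      exact hlu s t (Subtype.ext hst)
    rw [LinearIndependent.pair_iff' hv0] at hli
    push Not at hli
    obtain ⟨c, rfl⟩ := hli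
    have hc : c ≠ 0 := by rintro rfl; simp at hw0
    have huw : LinearIndependent ℂ ![u, c • v] := by
      rw [LinearIndependent.pair_iff] at hvu ⊢
      intro s t hst
      have := hvu (t * c) s (by rw [← hst]; module)
      refine ⟨this.2, ?_⟩
      simpa [hc] using this.1
    obtain ⟨S, hS, hSv⟩ := aux_step A B hAB v u hv hu hvu
    obtain ⟨S', hS', hSv'⟩ := aux_step A B hAB u _ hu hw huw
    refine ⟨S' * S, H.mul_mem (hH _ hS') (hH _ hS), ?_, ?_⟩
    · intro a ha
      rw [LinearEquiv.mul_apply, hS.2.2 a ha, hS'.2.2 a ha]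
    · rw [LinearEquiv.mul_apply, hSv, hSv']

/-- moved subspaces contain a vector leaving them -/
theorem aux_leave {C : Type*} [AddCommGroup C] [Module ℂ C] [FiniteDimensional ℂ C]
    (A : Submodule ℂ C) (W : C ≃ₗ[ℂ] C) (hWA : A.map (W : C →ₗ[ℂ] C) ≠ A) :
    ∃ u ∈ A, W u ∉ A := by
  by_contra! h
  refine hWA (Submodule.eq_of_le_of_finrank_eq ?_ (LinearEquiv.finrank_map_eq _ _))
  rintro _ ⟨x, hx, rfl⟩
  exact h x hx

theorem aux_key {C : Type*} [AddCommGroup C] [Module ℂ C] (a d : C) (hd : d ≠ 0)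
    (s t : ℂ) (hst : s ≠ t) (h : a + s • d = 0) : a + t • d ≠ 0 := by
  intro h'
  have : (s - t) • d = 0 := by
    have e : (s - t) • d = (a + s • d) - (a + t • d) := by module
    rw [e, h, h', sub_zero]
  rcases smul_eq_zero.1 this with h | h
  · exact hst (sub_eq_zero.1 h)
  · exact hd h

theorem aux_choose {C : Type*} [AddCommGroup C] [Module ℂ C] (a d a' d' : C) (hd : d ≠ 0)
    (hd' : d' ≠ 0) : ∃ t : ℂ, a + t • d ≠ 0 ∧ a' + t • d' ≠ 0 := by
  by_cases h0 : a + (0 : ℂ) • d = 0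
  · have h1 := aux_key a d hd 0 1 (by norm_num) h0
    have h2 := aux_key a d hd 0 2 (by norm_num) h0
    by_cases h : a' + (1 : ℂ) • d' = 0
    · exact ⟨2, h2, aux_key a' d' hd' 1 2 (by norm_num) h⟩
    · exact ⟨1, h1, h⟩
  · by_cases h0' : a' + (0 : ℂ) • d' = 0
    · have h1 := aux_key a' d' hd' 0 1 (by norm_num) h0'
      have h2 := aux_key a' d' hd' 0 2 (by norm_num) h0'
      by_cases h : a + (1 : ℂ) • d = 0
      · exact ⟨2, aux_key a d hd 1 2 (by norm_num) h, h2⟩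
      · exact ⟨1, h, h1⟩
    · exact ⟨0, h0, h0'⟩

theorem aux_main {C : Type*} [AddCommGroup C] [Module ℂ C] [FiniteDimensional ℂ C]
    (A B : Submodule ℂ C) (hAB : IsCompl A B)
    (hdim : Module.finrank ℂ A < Module.finrank ℂ B) (hA : 1 ≤ Module.finrank ℂ A)
    (W : C ≃ₗ[ℂ] C)
    (hWA : A.map (W : C →ₗ[ℂ] C) ≠ A) (hWB : B.map (W : C →ₗ[ℂ] C) ≠ B)
    (H : Subgroup (C ≃ₗ[ℂ] C))
    (hHA : ∀ S : C ≃ₗ[ℂ] C, (LinearMap.det (S : C →ₗ[ℂ] C) = 1 ∧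
      A.map (S : C →ₗ[ℂ] C) = A ∧ ∀ b ∈ B, S b = b) → S ∈ H)
    (hHB : ∀ S : C ≃ₗ[ℂ] C, (LinearMap.det (S : C →ₗ[ℂ] C) = 1 ∧
      B.map (S : C →ₗ[ℂ] C) = B ∧ ∀ a ∈ A, S a = a) → S ∈ H)
    (hHW : W ∈ H) (ψ φ : C) (hψ : ψ ≠ 0) (hφ : φ ≠ 0) : ∃ T ∈ H, T ψ = φ := by
  let R : C → C → Prop := fun x y => ∃ T ∈ H, T x = y
  have Rsymm : ∀ {x y}, R x y → R y x := by
    rintro x y ⟨T, hT, rfl⟩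
    exact ⟨T⁻¹, H.inv_mem hT, T.symm_apply_apply x⟩
  have Rtrans : ∀ {x y z}, R x y → R y z → R x z := by
    rintro x y z ⟨T, hT, rfl⟩ ⟨S, hS, rfl⟩
    exact ⟨S * T, H.mul_mem hS hT, rfl⟩
  have RW : ∀ x, R x (W x) := fun x => ⟨W, hHW, rfl⟩
  have RB : ∀ a ∈ A, ∀ b ∈ B, ∀ b' ∈ B, b ≠ 0 → b' ≠ 0 → R (a + b) (a + b') := by
    intro a ha b hb b' hb' h h'
    obtain ⟨S, hS, hSa, hSb⟩ := aux_trans A B hAB (by omega) H hHB b b' hb hb' h h'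
    exact ⟨S, hS, by rw [map_add, hSa a ha, hSb]⟩
  obtain ⟨u₀, hu₀, hWu₀⟩ := aux_leave A W hWA
  obtain ⟨v₀, hv₀, hWv₀⟩ := aux_leave B W hWB
  let p : C →ₗ[ℂ] C := A.projection B hAB
  let q : C →ₗ[ℂ] C := B.projection A hAB.symm
  have hp : ∀ x, p x ∈ A := fun x => Submodule.projection_apply_mem hAB x
  have hq : ∀ x, q x ∈ B := fun x => Submodule.projection_apply_mem hAB.symm x
  have hpq : ∀ x, p x + q x = x := fun x => Submodule.projection_add_projection_eq_self hAB x
  have hp0 : ∀ x, p x = 0 → x ∈ B := fun x h => by rw [← hpq x, h, zero_add]; exact hq x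
  have hq0 : ∀ x, q x = 0 → x ∈ A := fun x h => by rw [← hpq x, h, add_zero]; exact hp x
  have hqu : q (W u₀) ≠ 0 := fun h => hWu₀ (hq0 _ h)
  have hpv : p (W v₀) ≠ 0 := fun h => hWv₀ (hp0 _ h)
  -- a kernel vector
  obtain ⟨k, hkB, hk0, hpk⟩ : ∃ k ∈ B, k ≠ 0 ∧ p (W k) = 0 := by
    let F : B →ₗ[ℂ] A := (A.projectionOnto B hAB) ∘ₗ (W : C →ₗ[ℂ] C) ∘ₗ B.subtype
    have hker := LinearMap.ker_ne_bot_of_finrank_lt (f := F) hdim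
    obtain ⟨k, hk, hk0⟩ := Submodule.exists_mem_ne_zero_of_ne_bot hker
    refine ⟨k, k.2, by simpa using hk0, ?_⟩
    have h2 : F k = 0 := hk
    exact congrArg Subtype.val h2
  have hqk : q (W k) ≠ 0 := by
    intro h
    have : W k = 0 := by rw [← hpq (W k), hpk, h, add_zero]
    exact hk0 (by simpa using this)
  rcases Nat.lt_or_ge 1 (Module.finrank ℂ A) with hA2 | hA1
  · have RA : ∀ a ∈ A, ∀ a' ∈ A, ∀ b ∈ B, a ≠ 0 → a' ≠ 0 → R (a + b) (a' + b) := by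
      intro a ha a' ha' b hb h h'
      obtain ⟨S, hS, hSb, hSa⟩ := aux_trans B A hAB.symm hA2 H hHA a a' ha ha' h h'
      exact ⟨S, hS, by rw [map_add, hSb b hb, hSa]⟩
    have hu00 : u₀ ≠ 0 := by rintro rfl; simp at hWu₀
    have hv00 : v₀ ≠ 0 := by rintro rfl; simp at hWv₀
    -- everything is related to u₀ + v₀
    have h1 : ∀ x, p x ≠ 0 → q x ≠ 0 → R x (u₀ + v₀) := by
      intro x h h'
      have := Rtrans (RA (p x) (hp x) u₀ hu₀ (q x) (hq x) h hu00)
        (RB u₀ hu₀ (q x) (hq x) v₀ hv₀ h' hv00)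
      rwa [hpq] at this
    obtain ⟨v₁, hv₁, hpv₁, hqv₁⟩ : ∃ v ∈ B, p (W v) ≠ 0 ∧ q (W v) ≠ 0 := by
      by_cases h : q (W v₀) = 0
      · refine ⟨v₀ + k, B.add_mem hv₀ hkB, ?_, ?_⟩
        · simpa [hpk] using hpv
        · simpa [h] using hqk
      · exact ⟨v₀, hv₀, hpv, h⟩
    have hv10 : v₁ ≠ 0 := by rintro rfl; simp at hpv₁
    have h2 : ∀ x, q x ≠ 0 → R x (u₀ + v₀) := by
      intro x h'
      by_cases h : p x = 0
      · have h3 := RB 0 A.zero_mem (q x) (hq x) v₁ hv₁ h' hv10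
        have h4 : 0 + q x = x := by rw [← h, hpq]
        rw [h4, zero_add] at h3
        exact Rtrans h3 (Rtrans (RW _) (h1 _ hpv₁ hqv₁))
      · exact h1 x h h'
    have h3 : ∀ x, x ≠ 0 → R x (u₀ + v₀) := by
      intro x hx
      by_cases h : q x = 0
      · have hpx : p x = x := by have := hpq x; rwa [h, add_zero] at this
        have h3 := RA x (hq0 x h) u₀ hu₀ 0 B.zero_mem hx hu00
        rw [add_zero, add_zero] at h3
        exact Rtrans h3 (Rtrans (RW _) (h2 _ hqu))
      · exact h2 x h
    exact Rtrans (h3 ψ hψ) (Rsymm (h3 φ hφ))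
  · have hA1 : Module.finrank ℂ A = 1 := le_antisymm hA1 hA
    have hspan : ∀ x ∈ A, x ≠ 0 → ∀ y ∈ A, ∃ c : ℂ, c • x = y := by
      intro x hx hx0 y hy
      have hx0' : (⟨x, hx⟩ : A) ≠ 0 := by simpa [Subtype.ext_iff] using hx0
      obtain ⟨c, hc⟩ := exists_smul_eq_of_finrank_eq_one hA1 hx0' ⟨y, hy⟩
      exact ⟨c, congrArg Subtype.val hc⟩
    have h1 : ∀ x y, q x ≠ 0 → q y ≠ 0 → R x y := by
      intro x y hx hy
      obtain ⟨c, hc⟩ := hspan _ (hp (W v₀)) hpv (p y - p (W (p x)))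
        (A.sub_mem (hp _) (hp _))
      obtain ⟨t, ht, ht'⟩ : ∃ t : ℂ, c • v₀ + t • k ≠ 0 ∧
          q (W (p x + c • v₀)) + t • q (W k) ≠ 0 := aux_choose _ _ _ _ hk0 hqk
      have hvB : c • v₀ + t • k ∈ B := B.add_mem (B.smul_mem _ hv₀) (B.smul_mem _ hkB)
      have r1 := RB (p x) (hp x) (q x) (hq x) _ hvB hx ht
      rw [hpq] at r1
      have e1 : p (W (p x + (c • v₀ + t • k))) = p y := by
        simp only [map_add, map_smul, hc, hpk]
        module
      have e2 : q (W (p x + (c • v₀ + t • k))) ≠ 0 := by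
        rw [← add_assoc, map_add W, map_smul W, map_add q, map_smul q]
        exact ht'
      have r2 := RB (p y) (hp y) _ (hq (W (p x + (c • v₀ + t • k)))) (q y) (hq y) e2 hy
      rw [← e1, hpq, e1, hpq] at r2
      exact Rtrans r1 (Rtrans (RW _) r2)
    have h2 : ∀ x, x ≠ 0 → ∃ y, q y ≠ 0 ∧ R x y := by
      intro x hx
      by_cases h : q x = 0
      · refine ⟨W x, ?_, RW x⟩
        obtain ⟨c, hc⟩ := hspan x (hq0 x h) hx u₀ hu₀
        intro h0
        apply hqu
        rw [← hc, map_smul, map_smul, h0, smul_zero]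
      · exact ⟨x, h, 1, H.one_mem, rfl⟩
    obtain ⟨x, hx, rx⟩ := h2 ψ hψ
    obtain ⟨y, hy, ry⟩ := h2 φ hφ
    exact Rtrans rx (Rtrans (h1 x y hx hy) (Rsymm ry))


/-- Transitivity on nonzero vectors: under the bridge-lemma hypotheses, the subgroup
generated by the determinant-one automorphisms supported on `A`, those supported on
`B`, and the bridge `W`, acts transitively on `C \ {0}`. -/
theorem stmt12 {C : Type*} [AddCommGroup C] [Module ℂ C] [FiniteDimensional ℂ C]
    (A B : Submodule ℂ C) (hAB : IsCompl A B)
    (hdim : Module.finrank ℂ A < Module.finrank ℂ B) (hA : 1 ≤ Module.finrank ℂ A)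
    (W : C ≃ₗ[ℂ] C) (hWdet : LinearMap.det (W : C →ₗ[ℂ] C) = 1)
    (hWA : A.map (W : C →ₗ[ℂ] C) ≠ A) (hWB : B.map (W : C →ₗ[ℂ] C) ≠ B) :
    ∀ ψ φ : C, ψ ≠ 0 → φ ≠ 0 →
      ∃ T ∈ Subgroup.closure
          ({S : C ≃ₗ[ℂ] C | LinearMap.det (S : C →ₗ[ℂ] C) = 1 ∧
              A.map (S : C →ₗ[ℂ] C) = A ∧ ∀ b ∈ B, S b = b} ∪
            {S : C ≃ₗ[ℂ] C | LinearMap.det (S : C →ₗ[ℂ] C) = 1 ∧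
              B.map (S : C →ₗ[ℂ] C) = B ∧ ∀ a ∈ A, S a = a} ∪
            {W}),
        T ψ = φ := by

  intro ψ φ hψ hφ
  refine aux_main A B hAB hdim hA W hWA hWB _ ?_ ?_ ?_ ψ φ hψ hφ
  · exact fun S hS => Subgroup.subset_closure (Or.inl (Or.inl hS))
  · exact fun S hS => Subgroup.subset_closure (Or.inl (Or.inr hS))
  · exact Subgroup.subset_closure (Or.inr rfl)
end

section
/- (Non-unitary Solovay–Kitaev theorem, existence form.) For every n ≥ 2 and every R > 0 there exist ε₀ > 0 and constants C > 0, c > 0 (depending only on n and R) with the following property. Let 𝒢 be a finite subset of SL(n,ℂ) closed under taking inverses which is an ε₀-net of B_R = { V ∈ SL(n,ℂ) : ‖V − I‖ < R }, i.e. for every V ∈ B_R there is g ∈ 𝒢 with ‖V − g‖ ≤ ε₀. Then for every V ∈ B_R and every δ with 0 < δ < 1, there exist k ≤ C·(1 + log(1/δ))^c and elements g₁, …, g_k ∈ 𝒢 such that ‖V − g₁·g₂⋯g_k‖ < δ. -/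
/-- The operator norm (ℓ² → ℓ²) of a square complex matrix. -/
noncomputable def opNorm {n : ℕ} (M : Matrix (Fin n) (Fin n) ℂ) : ℝ :=
  ‖Matrix.toEuclideanCLM (𝕜 := ℂ) M‖

open scoped Matrix.Norms.L2Operator

abbrev Mt (n : ℕ) := Matrix (Fin n) (Fin n) ℂ

lemma opNorm_eq_norm {n : ℕ} (M : Mt n) : opNorm M = ‖M‖ := rfl

lemma sk_prod_expand {ι : Type*} (s : Finset ι) : ∃ C : ℝ, 0 ≤ C ∧ ∀ (x : ι → ℂ) (ε : ℝ),
    0 ≤ ε → ε ≤ 1 → (∀ i, ‖x i‖ ≤ ε) →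
    ‖∏ i ∈ s, (1 + x i) - 1 - ∑ i ∈ s, x i‖ ≤ C * ε ^ 2 := by
  classical
  induction s using Finset.induction_on with
  | empty => exact ⟨0, le_rfl, fun x ε _ _ _ => by simp⟩
  | insert a s ha ih =>
    obtain ⟨C, hC, h⟩ := ih
    refine ⟨C + (C + s.card), by positivity, fun x ε h0 h1 hx => ?_⟩
    rw [Finset.prod_insert ha, Finset.sum_insert ha]
    have hP := h x ε h0 h1 hx
    set P := ∏ i ∈ s, (1 + x i)
    set S := ∑ i ∈ s, x i with hS
    have hSn : ‖S‖ ≤ s.card * ε := by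
      calc ‖S‖ ≤ ∑ i ∈ s, ‖x i‖ := norm_sum_le _ _
        _ ≤ ∑ i ∈ s, ε := Finset.sum_le_sum fun i _ => hx i
        _ = _ := by simp
    have e2 : ε ^ 2 ≤ ε := by nlinarith
    have hP1 : ‖P - 1‖ ≤ (C + s.card) * ε := by
      calc ‖P - 1‖ = ‖(P - 1 - S) + S‖ := by congr 1; ring
        _ ≤ ‖P - 1 - S‖ + ‖S‖ := norm_add_le _ _
        _ ≤ C * ε + s.card * ε := by
          have := mul_le_mul_of_nonneg_left e2 hC
          linarith
        _ = _ := by ring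
    calc ‖(1 + x a) * P - 1 - (x a + S)‖ = ‖(P - 1 - S) + x a * (P - 1)‖ := by congr 1; ring
      _ ≤ ‖P - 1 - S‖ + ‖x a‖ * ‖P - 1‖ := (norm_add_le _ _).trans (by rw [norm_mul])
      _ ≤ C * ε ^ 2 + ε * ((C + s.card) * ε) := by
        gcongr
        exact hx a
      _ = _ := by ring

lemma sk_det_entry (n : ℕ) : ∃ C : ℝ, 0 ≤ C ∧ ∀ (v : Mt n) (ε : ℝ), 0 ≤ ε → ε ≤ 1 →
    (∀ i j, ‖v i j‖ ≤ ε) → ‖(1 + v).det - 1 - v.trace‖ ≤ C * ε ^ 2 := by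
  obtain ⟨C, hC, h⟩ := sk_prod_expand (Finset.univ : Finset (Fin n))
  refine ⟨C + ∑ σ : Equiv.Perm (Fin n), 2 ^ n, by positivity, fun v ε h0 h1 hv => ?_⟩
  rw [Matrix.det_apply', ← Finset.add_sum_erase _ _ (Finset.mem_univ (1 : Equiv.Perm (Fin n)))]
  have hA := h (fun i => v i i) ε h0 h1 (fun i => hv i i)
  have hB : ‖∑ σ ∈ Finset.univ.erase (1 : Equiv.Perm (Fin n)),
      ((Equiv.Perm.sign σ : ℤ) : ℂ) * ∏ i, (1 + v) (σ i) i‖ ≤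
      (∑ σ : Equiv.Perm (Fin n), 2 ^ n) * ε ^ 2 := by
    rw [Finset.sum_mul]
    refine (norm_sum_le _ _).trans ?_
    refine (Finset.sum_le_sum (g := fun _ => (2 : ℝ) ^ n * ε ^ 2) fun σ hσ => ?_).trans
      (Finset.sum_le_sum_of_subset_of_nonneg (Finset.erase_subset _ _)
        fun _ _ _ => by positivity)
    have hσ1 : σ ≠ 1 := (Finset.mem_erase.1 hσ).1
    obtain ⟨i, hi⟩ : ∃ i, σ i ≠ i := by
      by_contra! hcon
      exact hσ1 (Equiv.ext hcon)
    have hj : σ (σ i) ≠ σ i := fun hc => hi (σ.injective hc)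
    rw [norm_mul, norm_prod]
    have hs : ‖((Equiv.Perm.sign σ : ℤ) : ℂ)‖ = 1 := by
      rcases Int.units_eq_one_or (Equiv.Perm.sign σ) with h | h <;> simp [h]
    rw [hs, one_mul]
    calc ∏ k, ‖(1 + v) (σ k) k‖ ≤
        ∏ k, (2 * (if k = i then ε else 1) * (if k = σ i then ε else 1)) := by
          refine Finset.prod_le_prod (fun _ _ => norm_nonneg _) fun k _ => ?_
          have hoff : σ k ≠ k → ‖(1 + v) (σ k) k‖ ≤ ε := fun hk => by
            rw [Matrix.add_apply, Matrix.one_apply_ne hk, zero_add]; exact hv _ _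
          by_cases h1' : k = i
          · subst h1'
            rw [if_pos rfl, if_neg (Ne.symm hi)]
            have := hoff hi
            linarith
          · by_cases h2' : k = σ i
            · rw [if_neg h1', if_pos h2']
              have := hoff (by rw [h2']; exact hj)
              linarith
            · rw [if_neg h1', if_neg h2', Matrix.add_apply]
              have h3 : ‖(1 : Mt n) (σ k) k‖ ≤ 1 := by
                rw [Matrix.one_apply]; split_ifs <;> simp
              have := norm_add_le ((1 : Mt n) (σ k) k) (v (σ k) k)
              have := hv (σ k) k
              linarith
      _ = 2 ^ n * ε ^ 2 := by
          rw [Finset.prod_mul_distrib, Finset.prod_mul_distrib, Finset.prod_ite_eq',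
            Finset.prod_ite_eq']
          simp; ring
  have hid : ((Equiv.Perm.sign (1 : Equiv.Perm (Fin n)) : ℤ) : ℂ) *
      ∏ i, (1 + v) ((1 : Equiv.Perm (Fin n)) i) i = ∏ i, (1 + v i i) := by
    simp [Matrix.add_apply]
  rw [hid]
  have ht : v.trace = ∑ i, v i i := rfl
  rw [ht]
  set B := ∑ σ ∈ Finset.univ.erase (1 : Equiv.Perm (Fin n)),
      ((Equiv.Perm.sign σ : ℤ) : ℂ) * ∏ i, (1 + v) (σ i) i
  calc _ = ‖(∏ i, (1 + v i i) - 1 - ∑ i, v i i) + B‖ := by congr 1; ring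
    _ ≤ _ := norm_add_le _ _
    _ ≤ _ := by rw [add_mul]; exact add_le_add hA hB

lemma sk_functional {n : ℕ} (z : Mt n →ₗ[ℂ] ℂ) : ∃ K : ℝ, 0 < K ∧ ∀ v, ‖z v‖ ≤ K * ‖v‖ := by
  refine ⟨‖z.toContinuousLinearMap‖ + 1, by positivity, fun v => ?_⟩
  have := z.toContinuousLinearMap.le_opNorm v
  have h2 := norm_nonneg v
  simp only [LinearMap.coe_toContinuousLinearMap'] at this
  linarith

lemma sk_entry_bound (n : ℕ) : ∃ K : ℝ, 0 < K ∧ ∀ (v : Mt n) i j, ‖v i j‖ ≤ K * ‖v‖ := by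
  have h : ∀ i j : Fin n, ∃ K : ℝ, 0 < K ∧ ∀ v : Mt n, ‖v i j‖ ≤ K * ‖v‖ := fun i j => by
    obtain ⟨K, hK, h⟩ := sk_functional (Matrix.entryLinearMap ℂ ℂ i j : Mt n →ₗ[ℂ] ℂ)
    exact ⟨K, hK, fun v => by simpa using h v⟩
  choose K hK h using h
  refine ⟨1 + ∑ i, ∑ j, K i j, ?_, fun v i j => (h i j v).trans ?_⟩
  · have : 0 ≤ ∑ i, ∑ j, K i j :=
      Finset.sum_nonneg fun i _ => Finset.sum_nonneg fun j _ => (hK i j).le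
    linarith
  · gcongr
    have h1 : K i j ≤ ∑ j, K i j :=
      Finset.single_le_sum (f := fun j => K i j) (fun j _ => (hK i j).le) (Finset.mem_univ j)
    have h2 : ∑ j, K i j ≤ ∑ i, ∑ j, K i j :=
      Finset.single_le_sum (f := fun i => ∑ j, K i j)
        (fun i _ => Finset.sum_nonneg fun j _ => (hK i j).le) (Finset.mem_univ i)
    linarith

lemma sk_trace_bound (n : ℕ) : ∃ C : ℝ, 0 < C ∧ ∀ v : Mt n, C * ‖v‖ ≤ 1 → (1 + v).det = 1 →
    ‖v.trace‖ ≤ C * ‖v‖ ^ 2 := by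
  obtain ⟨K, hK, hKv⟩ := sk_entry_bound n
  obtain ⟨C, hC, h⟩ := sk_det_entry n
  refine ⟨K + C * K ^ 2, by positivity, fun v hv hd => ?_⟩
  have hn := norm_nonneg v
  have h1 : 0 ≤ C * K ^ 2 * ‖v‖ := by positivity
  have := h v (K * ‖v‖) (by positivity) (by linarith) (hKv v)
  rw [hd, sub_self, zero_sub, norm_neg] at this
  have h2 : 0 ≤ K * ‖v‖ ^ 2 := by positivity
  nlinarith

lemma sk_inv_bound (n : ℕ) (ρ : ℝ) : ∃ K : ℝ, 0 < K ∧ ∀ g : Mt n, g.det = 1 → ‖g‖ ≤ ρ →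
    ‖g⁻¹‖ ≤ K := by
  have : ProperSpace (Mt n) := FiniteDimensional.proper ℂ _
  have hc : Continuous (fun g : Mt n => g.adjugate) := Continuous.matrix_adjugate continuous_id
  obtain ⟨K, hK⟩ := (isCompact_closedBall (0 : Mt n) ρ).exists_bound_of_continuousOn
    hc.continuousOn
  refine ⟨max K 1, by positivity, fun g hg hn => ?_⟩
  rw [Matrix.inv_def, hg]
  simp only [Ring.inverse_one, one_smul]
  exact (hK g (by simpa using hn)).trans (le_max_left _ _)

/-- `M` is a product of at most `l` elements of `𝒢`. -/
def SKWord {n : ℕ} (𝒢 : Finset (Mt n)) (l : ℕ) (M : Mt n) : Prop :=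
  ∃ L : List (Mt n), L.length ≤ l ∧ (∀ g ∈ L, g ∈ 𝒢) ∧ L.prod = M

/-- `𝒢` consists of determinant one matrices and is closed under inverses. -/
def SKGood {n : ℕ} (𝒢 : Finset (Mt n)) : Prop :=
  (∀ g ∈ 𝒢, g.det = 1) ∧ (∀ g ∈ 𝒢, g⁻¹ ∈ 𝒢)

/-- words of length `l` are an `ε`-net of the `r`-ball. -/
def SKNet {n : ℕ} (𝒢 : Finset (Mt n)) (r ε : ℝ) (l : ℕ) : Prop :=
  ∀ U : Mt n, U.det = 1 → ‖U - 1‖ ≤ r → ∃ w, SKWord 𝒢 l w ∧ ‖U - w‖ ≤ ε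

lemma SKWord.mul {n : ℕ} {𝒢 : Finset (Mt n)} {l m : ℕ} {M N : Mt n} (h : SKWord 𝒢 l M)
    (h' : SKWord 𝒢 m N) : SKWord 𝒢 (l + m) (M * N) := by
  obtain ⟨L, h1, h2, h3⟩ := h
  obtain ⟨L', h1', h2', h3'⟩ := h'
  refine ⟨L ++ L', by simp; omega, fun g hg => ?_, by simp [h3, h3']⟩
  rcases List.mem_append.1 hg with h | h
  exacts [h2 g h, h2' g h]

lemma SKWord.mono {n : ℕ} {𝒢 : Finset (Mt n)} {l m : ℕ} {M : Mt n} (h : SKWord 𝒢 l M)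
    (hlm : l ≤ m) : SKWord 𝒢 m M := by
  obtain ⟨L, h1, h2, h3⟩ := h
  exact ⟨L, h1.trans hlm, h2, h3⟩

lemma SKWord.inv {n : ℕ} {𝒢 : Finset (Mt n)} (hG : SKGood 𝒢) {l : ℕ} {M : Mt n}
    (h : SKWord 𝒢 l M) : SKWord 𝒢 l M⁻¹ := by
  obtain ⟨L, h1, h2, h3⟩ := h
  refine ⟨L.reverse.map Inv.inv, by simpa using h1, fun g hg => ?_, ?_⟩
  · simp only [List.mem_map, List.mem_reverse] at hg
    obtain ⟨a, ha, rfl⟩ := hg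
    exact hG.2 a (h2 a ha)
  · rw [← Matrix.list_prod_inv_reverse, h3]

lemma SKWord.det {n : ℕ} {𝒢 : Finset (Mt n)} (hG : SKGood 𝒢) {l : ℕ} {M : Mt n}
    (h : SKWord 𝒢 l M) : M.det = 1 := by
  obtain ⟨L, h1, h2, rfl⟩ := h
  clear h1
  induction L with
  | nil => simp
  | cons a L ih =>
    rw [List.prod_cons, Matrix.det_mul, ih fun g hg => h2 g (List.mem_cons_of_mem _ hg),
      hG.1 a (h2 a List.mem_cons_self), one_mul]

lemma sk_norm_one_le (n : ℕ) : ‖(1 : Mt n)‖ ≤ 1 := by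
  rw [← Matrix.diagonal_one, Matrix.l2_opNorm_diagonal]
  exact (pi_norm_le_iff_of_nonneg zero_le_one).2 fun i => by simp

/-- bounds on the inverse of a matrix near the identity -/
lemma sk_inv_near {n : ℕ} (w : Mt n) (hd : w.det = 1) (h : ‖w - 1‖ ≤ 1 / 2) :
    ‖w⁻¹‖ ≤ 2 ∧ ‖w⁻¹ - 1‖ ≤ 2 * ‖w - 1‖ := by
  have hw : w⁻¹ * w = 1 := Matrix.nonsing_inv_mul _ (by rw [hd]; exact isUnit_one)
  have e1 : w⁻¹ - 1 = -(w⁻¹ * (w - 1)) := by rw [mul_sub, hw]; noncomm_ring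
  have n1 : ‖w⁻¹ - 1‖ ≤ ‖w⁻¹‖ * ‖w - 1‖ := by
    rw [e1, norm_neg]; exact norm_mul_le _ _
  have n2 : ‖w⁻¹‖ ≤ ‖w⁻¹ - 1‖ + 1 := by
    calc ‖w⁻¹‖ = ‖(w⁻¹ - 1) + 1‖ := by congr 1; noncomm_ring
      _ ≤ _ := (norm_add_le _ _).trans (by gcongr; exact sk_norm_one_le n)
  have h0 := norm_nonneg w⁻¹
  have h0' := norm_nonneg (w - 1)
  have : ‖w⁻¹‖ ≤ 2 := by nlinarith
  exact ⟨this, by nlinarith⟩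

lemma sk_comm_est {n : ℕ} (a b A B : Mt n) (κ s : ℝ) (hκ : 1 ≤ κ) (hs : 0 ≤ s)
    (hκs : 4 * κ * s ≤ 1) (ha : ‖a‖ ≤ κ * s) (hb : ‖b‖ ≤ κ * s) (hA : A.det = 1)
    (hB : B.det = 1) (haA : ‖1 + a - A‖ ≤ s ^ 2) (hbB : ‖1 + b - B‖ ≤ s ^ 2) :
    ‖A * B * A⁻¹ * B⁻¹ - 1 - (a * b - b * a)‖ ≤ (24 * κ + 24 * κ ^ 3) * s ^ 3 := by
  have hs1 : s ≤ 1 := by nlinarith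
  have hs2 : s ^ 2 ≤ κ * s := by nlinarith
  have hks0 : 0 ≤ κ * s := by positivity
  obtain ⟨p, hp⟩ : ∃ p, p = A - 1 := ⟨_, rfl⟩
  obtain ⟨q, hq⟩ : ∃ q, q = B - 1 := ⟨_, rfl⟩
  have hpa : ‖p - a‖ ≤ s ^ 2 := by
    have e : p - a = -(1 + a - A) := by rw [hp]; abel
    rw [e, norm_neg]; exact haA
  have hqb : ‖q - b‖ ≤ s ^ 2 := by
    have e : q - b = -(1 + b - B) := by rw [hq]; abel
    rw [e, norm_neg]; exact hbB
  have hpn : ‖p‖ ≤ 2 * (κ * s) := by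
    have := norm_add_le (p - a) a
    rw [sub_add_cancel] at this; linarith
  have hqn : ‖q‖ ≤ 2 * (κ * s) := by
    have := norm_add_le (q - b) b
    rw [sub_add_cancel] at this; linarith
  obtain ⟨hA1, hA2⟩ := sk_inv_near A hA (by rw [← hp]; linarith)
  obtain ⟨hB1, hB2⟩ := sk_inv_near B hB (by rw [← hq]; linarith)
  rw [← hp] at hA2
  rw [← hq] at hB2
  have hAi : A * A⁻¹ = 1 := Matrix.mul_nonsing_inv _ (by rw [hA]; exact isUnit_one)
  have hBi : B * B⁻¹ = 1 := Matrix.mul_nonsing_inv _ (by rw [hB]; exact isUnit_one)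
  obtain ⟨Y, hY⟩ : ∃ Y, Y = A⁻¹ * B⁻¹ := ⟨_, rfl⟩
  have hBA : B * A * Y = 1 := by
    rw [hY, mul_assoc, ← mul_assoc A, hAi, one_mul, hBi]
  have hX : A * B * A⁻¹ * B⁻¹ - 1 = (p * q - q * p) * Y := by
    have : A * B * A⁻¹ * B⁻¹ = A * B * Y := by rw [hY]; simp only [mul_assoc]
    rw [this, ← hBA, ← sub_mul, hp, hq]
    congr 1
    noncomm_ring
  have hYn : ‖Y‖ ≤ 4 := by
    rw [hY]
    have := norm_mul_le A⁻¹ B⁻¹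
    have h0 := norm_nonneg A⁻¹
    have h1 := norm_nonneg B⁻¹
    nlinarith
  have hY1 : ‖Y - 1‖ ≤ 12 * (κ * s) := by
    have e : Y - 1 = A⁻¹ * (B⁻¹ - 1) + (A⁻¹ - 1) := by rw [hY]; noncomm_ring
    rw [e]
    have h1 := norm_add_le (A⁻¹ * (B⁻¹ - 1)) (A⁻¹ - 1)
    have h2 := norm_mul_le A⁻¹ (B⁻¹ - 1)
    have h3 : ‖A⁻¹‖ * ‖B⁻¹ - 1‖ ≤ 2 * (2 * (2 * (κ * s))) :=
      mul_le_mul hA1 (by linarith) (norm_nonneg _) (by norm_num)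
    linarith
  obtain ⟨c, hc⟩ : ∃ c, c = a * b - b * a := ⟨_, rfl⟩
  have hcn : ‖c‖ ≤ 2 * (κ * s) ^ 2 := by
    rw [hc]
    have h1 := norm_sub_le (a * b) (b * a)
    have h2 := norm_mul_le a b
    have h3 := norm_mul_le b a
    have h4 : ‖a‖ * ‖b‖ ≤ (κ * s) * (κ * s) := mul_le_mul ha hb (norm_nonneg _) hks0
    nlinarith
  have hd : ‖(p * q - q * p) - c‖ ≤ 6 * κ * s ^ 3 := by
    have e : (p * q - q * p) - c =
        ((p - a) * q + a * (q - b)) - (q * (p - a) + (q - b) * a) := by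
      rw [hc]; noncomm_ring
    rw [e]
    have h1 := norm_sub_le ((p - a) * q + a * (q - b)) (q * (p - a) + (q - b) * a)
    have h2 := norm_add_le ((p - a) * q) (a * (q - b))
    have h3 := norm_add_le (q * (p - a)) ((q - b) * a)
    have h4 := norm_mul_le (p - a) q
    have h5 := norm_mul_le q (p - a)
    have h6 := norm_mul_le a (q - b)
    have h7 := norm_mul_le (q - b) a
    have h8 : ‖p - a‖ * ‖q‖ ≤ s ^ 2 * (2 * (κ * s)) :=
      mul_le_mul hpa hqn (norm_nonneg _) (by positivity)
    have h9 : ‖q - b‖ * ‖a‖ ≤ s ^ 2 * (κ * s) :=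
      mul_le_mul hqb ha (norm_nonneg _) (by positivity)
    nlinarith
  rw [hX, ← hc]
  have e : (p * q - q * p) * Y - c = ((p * q - q * p) - c) * Y + c * (Y - 1) := by noncomm_ring
  rw [e]
  have h1 := norm_add_le (((p * q - q * p) - c) * Y) (c * (Y - 1))
  have h2 := norm_mul_le ((p * q - q * p) - c) Y
  have h3 := norm_mul_le c (Y - 1)
  have h4 : ‖(p * q - q * p) - c‖ * ‖Y‖ ≤ (6 * κ * s ^ 3) * 4 :=
    mul_le_mul hd hYn (norm_nonneg _) (by positivity)
  have h5 : ‖c‖ * ‖Y - 1‖ ≤ (2 * (κ * s) ^ 2) * (12 * (κ * s)) :=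
    mul_le_mul hcn hY1 (norm_nonneg _) (by positivity)
  calc _ ≤ (6 * κ * s ^ 3) * 4 + (2 * (κ * s) ^ 2) * (12 * (κ * s)) := by linarith
    _ = _ := by ring

/-- `1 + φ v` can be approximated to third order by short words. -/
def SKAppr {n : ℕ} (r : ℝ) (φ : Mt n → Mt n) : Prop :=
  ∃ C : ℝ, 0 < C ∧ ∃ m : ℕ, ∀ (𝒢 : Finset (Mt n)) (l : ℕ) (s : ℝ), SKGood 𝒢 → 0 ≤ s →
    C * s ≤ 1 → SKNet 𝒢 r (s ^ 2) l → ∀ v : Mt n, ‖v‖ ≤ 2 * s ^ 2 →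
    ‖φ v‖ ≤ C * s ^ 2 ∧ ∃ w, SKWord 𝒢 (m * l) w ∧ ‖w - 1 - φ v‖ ≤ C * s ^ 3

lemma SKAppr.zero {n : ℕ} (r : ℝ) : SKAppr (n := n) r (fun _ => 0) := by
  refine ⟨1, one_pos, 0, fun 𝒢 l s _ hs _ _ v _ => ⟨by simp; positivity, 1, ?_, ?_⟩⟩
  · exact ⟨[], by simp, by simp, by simp⟩
  · simp; positivity

lemma SKAppr.add {n : ℕ} {r : ℝ} {φ ψ : Mt n → Mt n} (h1 : SKAppr r φ) (h2 : SKAppr r ψ) :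
    SKAppr r (fun v => φ v + ψ v) := by
  obtain ⟨C₁, hC₁, m₁, h₁⟩ := h1
  obtain ⟨C₂, hC₂, m₂, h₂⟩ := h2
  refine ⟨1 + 3 * C₁ + 3 * C₂, by positivity, m₁ + m₂, fun 𝒢 l s hG hs hCs hN v hv => ?_⟩
  have hc1 : 0 ≤ C₁ * s := by positivity
  have hc2 : 0 ≤ C₂ * s := by positivity
  have hs1 : s ≤ 1 := by nlinarith
  obtain ⟨a1, w₁, b1, c1⟩ := h₁ 𝒢 l s hG hs (by nlinarith) hN v hv
  obtain ⟨a2, w₂, b2, c2⟩ := h₂ 𝒢 l s hG hs (by nlinarith) hN v hv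
  have hC1s : C₁ * s ≤ 1 := by nlinarith
  have hC2s : C₂ * s ≤ 1 := by nlinarith
  have hs2 : 0 ≤ s ^ 2 := by positivity
  have hs21 : s ^ 2 ≤ 1 := by nlinarith
  have hs3 : 0 ≤ s ^ 3 := by positivity
  have t1 : C₁ * s ^ 2 ≤ 1 := by nlinarith
  have t2 : C₂ * s ^ 2 ≤ 1 := by nlinarith
  have t3 : C₂ * s ^ 3 ≤ 1 := by
    calc C₂ * s ^ 3 = (C₂ * s) * s ^ 2 := by ring
      _ ≤ 1 * 1 := by gcongr
      _ = 1 := by ring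
  refine ⟨(norm_add_le _ _).trans (by nlinarith), w₁ * w₂, ?_, ?_⟩
  · rw [add_mul]; exact b1.mul b2
  · have e : w₁ * w₂ - 1 - (φ v + ψ v) = (w₁ - 1 - φ v) * w₂ + (1 + φ v) * (w₂ - 1 - ψ v)
        + φ v * ψ v := by noncomm_ring
    have hone := sk_norm_one_le n
    have hw2 : ‖w₂‖ ≤ 3 := by
      have e2 : w₂ = (w₂ - 1 - ψ v) + (1 + ψ v) := by noncomm_ring
      have q1 := norm_add_le (w₂ - 1 - ψ v) (1 + ψ v)
      rw [← e2] at q1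
      have q2 := norm_add_le 1 (ψ v)
      linarith
    have hφ : ‖1 + φ v‖ ≤ 2 := by
      have q2 := norm_add_le 1 (φ v)
      linarith
    rw [e]
    have q1 := norm_add_le ((w₁ - 1 - φ v) * w₂ + (1 + φ v) * (w₂ - 1 - ψ v)) (φ v * ψ v)
    have q2 := norm_add_le ((w₁ - 1 - φ v) * w₂) ((1 + φ v) * (w₂ - 1 - ψ v))
    have q3 := norm_mul_le (w₁ - 1 - φ v) w₂
    have q4 := norm_mul_le (1 + φ v) (w₂ - 1 - ψ v)
    have q5 := norm_mul_le (φ v) (ψ v)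
    have r3 : ‖w₁ - 1 - φ v‖ * ‖w₂‖ ≤ C₁ * s ^ 3 * 3 :=
      mul_le_mul c1 hw2 (norm_nonneg _) (by positivity)
    have r4 : ‖1 + φ v‖ * ‖w₂ - 1 - ψ v‖ ≤ 2 * (C₂ * s ^ 3) :=
      mul_le_mul hφ c2 (norm_nonneg _) (by positivity)
    have r5 : ‖φ v‖ * ‖ψ v‖ ≤ (C₁ * s ^ 2) * (C₂ * s ^ 2) :=
      mul_le_mul a1 a2 (norm_nonneg _) (by positivity)
    have r6 : (C₁ * s ^ 2) * (C₂ * s ^ 2) ≤ C₂ * s ^ 3 := by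
      calc (C₁ * s ^ 2) * (C₂ * s ^ 2) = (C₁ * s) * (C₂ * s ^ 3) := by ring
        _ ≤ 1 * (C₂ * s ^ 3) := by gcongr
        _ = _ := by ring
    linarith

lemma SKAppr.sum {n : ℕ} {r : ℝ} {ι : Type*} (t : Finset ι) (φ : ι → Mt n → Mt n)
    (h : ∀ i ∈ t, SKAppr r (φ i)) : SKAppr r (fun v => ∑ i ∈ t, φ i v) := by
  classical
  induction t using Finset.induction_on with
  | empty => simpa using SKAppr.zero r
  | insert a t ha ih =>
    simp only [Finset.sum_insert ha]
    exact (h a (Finset.mem_insert_self _ _)).add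
      (ih fun i hi => h i (Finset.mem_insert_of_mem hi))

lemma SKAppr.comm {n : ℕ} {r : ℝ} (hr : 0 < r) (z : Mt n →ₗ[ℂ] ℂ) (N M : Mt n)
    (hN : ∀ x : ℂ, (1 + x • N).det = 1) (hM : ∀ x : ℂ, (1 + x • M).det = 1) :
    SKAppr r (fun v => z v • (N * M - M * N)) := by
  obtain ⟨K, hK, hz⟩ := sk_functional z
  obtain ⟨D, hD⟩ : ∃ D, D = 1 + ‖N‖ + ‖M‖ := ⟨_, rfl⟩
  obtain ⟨κ, hκd⟩ : ∃ κ, κ = (1 + 2 * K) * D := ⟨_, rfl⟩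
  have hN0 := norm_nonneg N
  have hM0 := norm_nonneg M
  have hD1 : 1 ≤ D := by linarith
  have hκ : 1 ≤ κ := by rw [hκd]; nlinarith
  have hκ0 : 0 < κ := by linarith
  refine ⟨24 * κ + 24 * κ ^ 3 + 4 * κ + κ / r + 4 * K * D ^ 2, by positivity, 4,
    fun 𝒢 l s hG hs hCs hNet v hv => ?_⟩
  have g1 : 0 ≤ (24 * κ + 24 * κ ^ 3) * s := by positivity
  have g2 : 0 ≤ 4 * κ * s := by positivity
  have g3 : 0 ≤ κ / r * s := by positivity
  have g4 : 0 ≤ 4 * K * D ^ 2 * s := by positivity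
  have hκs : 4 * κ * s ≤ 1 := by nlinarith
  have hκr : κ * s ≤ r := by
    have : κ / r * s ≤ 1 := by nlinarith
    have h2 : κ / r * s = κ * s / r := by ring
    rw [h2, div_le_one hr] at this
    exact this
  have hzv : ‖z v‖ ≤ 2 * K * s ^ 2 := by
    have := hz v
    nlinarith
  obtain ⟨x, hx⟩ : ∃ x, x = √‖z v‖ := ⟨_, rfl⟩
  have hx0 : 0 ≤ x := by rw [hx]; positivity
  have hxx : x * x = ‖z v‖ := by rw [hx]; exact Real.mul_self_sqrt (norm_nonneg _)
  have hxs : x ≤ (1 + 2 * K) * s := by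
    rw [hx]
    apply Real.sqrt_le_iff.2
    refine ⟨by positivity, hzv.trans ?_⟩
    have : 0 ≤ s ^ 2 := by positivity
    have : 0 ≤ K * s ^ 2 := by positivity
    have : 0 ≤ K * K * s ^ 2 := by positivity
    nlinarith
  obtain ⟨y, hy⟩ : ∃ y : ℂ, y = z v / (x : ℂ) := ⟨_, rfl⟩
  have hyn : ‖y‖ ≤ x := by
    rw [hy, norm_div, ← hxx, Complex.norm_real, Real.norm_of_nonneg hx0]
    by_cases h0 : x = 0
    · simp [h0]
    · field_simp; exact le_rfl
  have hxy : (x : ℂ) * y = z v := by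
    rw [hy]
    by_cases h0 : x = 0
    · have : z v = 0 := by rw [← norm_eq_zero, ← hxx, h0]; simp
      simp [this]
    · field_simp [h0]
  have hnbound : ∀ (c : ℂ) (P : Mt n), ‖c‖ ≤ x → ‖P‖ ≤ D → ‖c • P‖ ≤ κ * s := by
    intro c P hc hP
    rw [norm_smul, hκd]
    calc ‖c‖ * ‖P‖ ≤ ((1 + 2 * K) * s) * D :=
          mul_le_mul (hc.trans hxs) hP (norm_nonneg _) (by positivity)
      _ = _ := by ring
  have ha := hnbound (x : ℂ) N (by rw [Complex.norm_real, Real.norm_of_nonneg hx0])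
    (by linarith)
  have hb := hnbound y M hyn (by linarith)
  obtain ⟨A, hAw, hA⟩ := hNet (1 + (x : ℂ) • N) (hN _) (by
    rw [add_sub_cancel_left]; exact ha.trans hκr)
  obtain ⟨B, hBw, hB⟩ := hNet (1 + y • M) (hM _) (by
    rw [add_sub_cancel_left]; exact hb.trans hκr)
  have key := sk_comm_est _ _ A B κ s hκ hs hκs ha hb (hAw.det hG) (hBw.det hG) hA hB
  have e : ((x : ℂ) • N) * (y • M) - (y • M) * ((x : ℂ) • N) = z v • (N * M - M * N) := by
    rw [smul_mul_smul_comm, smul_mul_smul_comm, mul_comm y, hxy, smul_sub]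
  rw [e] at key
  refine ⟨?_, A * B * A⁻¹ * B⁻¹, ?_, key.trans ?_⟩
  · rw [norm_smul]
    have q1 := norm_sub_le (N * M) (M * N)
    have q2 := norm_mul_le N M
    have q3 := norm_mul_le M N
    have q4 : ‖N‖ * ‖M‖ ≤ D * D := mul_le_mul (by linarith) (by linarith) hM0 (by linarith)
    calc ‖z v‖ * ‖N * M - M * N‖ ≤ (2 * K * s ^ 2) * (2 * D ^ 2) :=
          mul_le_mul hzv (by nlinarith) (norm_nonneg _) (by positivity)
      _ = (4 * K * D ^ 2) * s ^ 2 := by ring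
      _ ≤ _ := by
        gcongr
        have : 0 ≤ 24 * κ + 24 * κ ^ 3 + 4 * κ + κ / r := by positivity
        linarith
  · have := ((hAw.mul hBw).mul (hAw.inv hG)).mul (hBw.inv hG)
    exact this.mono (by omega)
  · have : 0 ≤ 4 * κ + κ / r + 4 * K * D ^ 2 := by positivity
    exact mul_le_mul_of_nonneg_right (by linarith) (by positivity)

lemma sk_det_single {n : ℕ} {i j : Fin n} (hij : i ≠ j) (x : ℂ) :
    (1 + x • Matrix.single i j (1 : ℂ)).det = 1 := by
  rw [Matrix.smul_single, smul_eq_mul, mul_one]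
  exact Matrix.det_transvection_of_ne i j hij x

lemma SKAppr.diag {n : ℕ} {r : ℝ} (hr : 0 < r) (z : Mt n →ₗ[ℂ] ℂ) (i j : Fin n) :
    SKAppr r (fun v => z v • (Matrix.single i i (1 : ℂ) - Matrix.single j j (1 : ℂ))) := by
  by_cases hij : i = j
  · subst hij
    simpa using SKAppr.zero (n := n) r
  · have := SKAppr.comm hr z (Matrix.single i j 1) (Matrix.single j i 1)
      (sk_det_single hij) (sk_det_single (Ne.symm hij))
    simpa using this

lemma SKAppr.off {n : ℕ} {r : ℝ} (hr : 0 < r) (z : Mt n →ₗ[ℂ] ℂ) {i j : Fin n} (hij : i ≠ j) :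
    SKAppr r (fun v => z v • (Matrix.single i j (1 : ℂ))) := by
  have hji := Ne.symm hij
  set E := Matrix.single i j (1 : ℂ) with hE
  set F := Matrix.single j i (1 : ℂ) with hF
  have hEE : E * E = 0 := Matrix.single_mul_single_of_ne _ _ _ _ hji _
  have hT : (1 + E).det = 1 := by simpa using sk_det_single hij 1
  have hT' : (1 - E).det = 1 := by simpa [sub_eq_add_neg] using sk_det_single hij (-1)
  have hTT : (1 + E) * (1 - E) = 1 := by
    have : (1 + E) * (1 - E) = 1 - E * E := by noncomm_ring
    rw [this, hEE, sub_zero]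
  have hN : ∀ x : ℂ, (1 + x • ((1 + E) * F * (1 - E))).det = 1 := by
    intro x
    have e : 1 + x • ((1 + E) * F * (1 - E)) = (1 + E) * (1 + x • F) * (1 - E) := by
      rw [mul_add (1 + E) 1, add_mul (_ * _) _ (1 - E), mul_one, hTT, Matrix.mul_smul, Matrix.smul_mul]
    rw [e, Matrix.det_mul, Matrix.det_mul, hT, hT', sk_det_single hji]
    simp
  have h1 := SKAppr.comm hr ((1 / 2 : ℂ) • z) ((1 + E) * F * (1 - E)) E hN (sk_det_single hij)
  have h2 := SKAppr.diag hr ((1 / 2 : ℂ) • z) i j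
  have h3 := h1.add h2
  have hEF : E * F = Matrix.single i i 1 := by simp [hE, hF]
  have hFE : F * E = Matrix.single j j 1 := by simp [hE, hF]
  have hEFE : E * F * E = E := by rw [hEF]; simp [hE]
  have e : (1 + E) * F * (1 - E) * E - E * ((1 + E) * F * (1 - E)) =
      (2 : ℂ) • E - (E * F - F * E) := by
    have e1 : (1 + E) * F * (1 - E) * E - E * ((1 + E) * F * (1 - E)) =
      F * E + E * F * E - F * (E * E) - E * F * (E * E) - E * F + E * F * E
        - (E * E) * F + (E * E) * F * E := by noncomm_ring
    rw [e1, hEE, hEFE, two_smul]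
    simp only [mul_zero, zero_mul]
    abel
  convert h3 using 1
  funext v
  rw [e, hEF, hFE]
  simp only [LinearMap.smul_apply, smul_eq_mul]
  module

lemma SKAppr.full {n : ℕ} {r : ℝ} (hr : 0 < r) (o : Fin n) :
    SKAppr r (fun v : Mt n => v - v.trace • Matrix.single o o (1 : ℂ)) := by
  have h : SKAppr r (fun v : Mt n => ∑ i, ∑ j, v i j •
      (Matrix.single i j (1 : ℂ) - if i = j then Matrix.single o o (1 : ℂ) else 0)) := by
    refine SKAppr.sum _ _ fun i _ => SKAppr.sum _ _ fun j _ => ?_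
    by_cases hij : i = j
    · subst hij
      simpa using SKAppr.diag hr (Matrix.entryLinearMap ℂ ℂ i i : Mt n →ₗ[ℂ] ℂ) i o
    · simpa [hij] using SKAppr.off hr (Matrix.entryLinearMap ℂ ℂ i j : Mt n →ₗ[ℂ] ℂ) hij
  convert h using 1
  funext v
  simp only [smul_sub, Finset.sum_sub_distrib]
  congr 1
  · conv_lhs => rw [Matrix.matrix_eq_sum_single v]
    simp [Matrix.smul_single]
  · simp [Matrix.trace, Finset.sum_smul, smul_ite]

lemma sk_step (n : ℕ) (hn : 2 ≤ n) (r : ℝ) (hr : 0 < r) (hr4 : r ≤ 1 / 4) :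
    ∃ C : ℝ, 0 < C ∧ ∃ m : ℕ, ∀ (𝒢 : Finset (Mt n)) (l : ℕ) (s : ℝ), SKGood 𝒢 → 0 ≤ s →
    C * s ≤ 1 → SKNet 𝒢 r (s ^ 2) l → SKNet 𝒢 r (C * s ^ 3) ((m + 1) * l) := by
  obtain ⟨C, hC, m, h⟩ := SKAppr.full hr (⟨0, by omega⟩ : Fin n)
  obtain ⟨T, hT, hTr⟩ := sk_trace_bound n
  set S := Matrix.single (⟨0, by omega⟩ : Fin n) (⟨0, by omega⟩ : Fin n) (1 : ℂ) with hS
  have hS0 := norm_nonneg S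
  refine ⟨2 * (C + 4 * T * ‖S‖) + 2 * T + 2, by positivity, m, fun 𝒢 l s hG hs hCs hN U hU hU1 => ?_⟩
  have g0 : 0 ≤ C * s := by positivity
  have g1 : 0 ≤ T * s := by positivity
  have g2 : 0 ≤ T * ‖S‖ * s := by positivity
  have hs2 : s ≤ 1 / 2 := by nlinarith
  have hTs : T * s ≤ 1 / 2 := by nlinarith
  obtain ⟨w, hw, hwU⟩ := hN U hU hU1
  have hwd := hw.det hG
  have hw1 : ‖w - 1‖ ≤ 1 / 2 := by
    have e : w - 1 = (U - 1) - (U - w) := by abel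
    rw [e]
    have := norm_sub_le (U - 1) (U - w)
    nlinarith
  obtain ⟨i1, -⟩ := sk_inv_near w hwd hw1
  have hwn : ‖w‖ ≤ 2 := by
    have := norm_add_le (w - 1) 1
    rw [sub_add_cancel] at this
    have := sk_norm_one_le n
    linarith
  have hwi : w * w⁻¹ = 1 := Matrix.mul_nonsing_inv _ (by rw [hwd]; exact isUnit_one)
  have hiw : w⁻¹ * w = 1 := Matrix.nonsing_inv_mul _ (by rw [hwd]; exact isUnit_one)
  obtain ⟨v, hv⟩ : ∃ v, v = U * w⁻¹ - 1 := ⟨_, rfl⟩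
  have hvn : ‖v‖ ≤ 2 * s ^ 2 := by
    have e : v = (U - w) * w⁻¹ := by rw [hv, sub_mul, hwi]
    rw [e]
    have q := norm_mul_le (U - w) w⁻¹
    have : ‖U - w‖ * ‖w⁻¹‖ ≤ s ^ 2 * 2 := mul_le_mul hwU i1 (norm_nonneg _) (by positivity)
    linarith
  have hdet : (1 + v).det = 1 := by
    rw [hv, add_sub_cancel, Matrix.det_mul, Matrix.det_nonsing_inv, hU, hwd]; simp
  have htr := hTr v (by nlinarith) hdet
  obtain ⟨-, w', hw', hwv⟩ := h 𝒢 l s hG hs (by nlinarith) hN v hvn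
  refine ⟨w' * w, by rw [add_mul, one_mul]; exact hw'.mul hw, ?_⟩
  have e : U - w' * w = -((w' - 1 - (v - v.trace • S)) - v.trace • S) * w := by
    have e1 : -((w' - 1 - (v - v.trace • S)) - v.trace • S) = (1 + v) - w' := by abel
    rw [e1, hv, add_sub_cancel, sub_mul, mul_assoc, hiw, mul_one]
  rw [e]
  have q1 := norm_mul_le (-((w' - 1 - (v - v.trace • S)) - v.trace • S)) w
  rw [norm_neg] at q1
  have q2 := norm_sub_le (w' - 1 - (v - v.trace • S)) (v.trace • S)
  rw [norm_smul] at q2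
  have q3 : ‖v.trace‖ ≤ 4 * T * s ^ 3 := by
    refine htr.trans ?_
    have : ‖v‖ ^ 2 ≤ (2 * s ^ 2) ^ 2 := by gcongr
    have h4 : s ^ 4 ≤ s ^ 3 := pow_le_pow_of_le_one hs (by linarith) (by norm_num)
    calc T * ‖v‖ ^ 2 ≤ T * (4 * s ^ 3) := by
          gcongr
          calc ‖v‖ ^ 2 ≤ (2 * s ^ 2) ^ 2 := this
            _ = 4 * s ^ 4 := by ring
            _ ≤ _ := by linarith
      _ = _ := by ring
  have q4 : ‖v.trace‖ * ‖S‖ ≤ 4 * T * s ^ 3 * ‖S‖ := by gcongr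
  have q5 : ‖w' - 1 - (v - v.trace • S) - v.trace • S‖ ≤ (C + 4 * T * ‖S‖) * s ^ 3 := by
    rw [add_mul]
    have : 4 * T * s ^ 3 * ‖S‖ = 4 * T * ‖S‖ * s ^ 3 := by ring
    linarith
  have q6 := mul_le_mul q5 hwn (norm_nonneg _) (by positivity)
  have q7 : 0 ≤ (2 * T + 2) * s ^ 3 := by positivity
  nlinarith

lemma sk_iter (n : ℕ) (hn : 2 ≤ n) (r : ℝ) (hr : 0 < r) (hr4 : r ≤ 1 / 4) :
    ∃ C : ℝ, 0 < C ∧ ∃ m : ℕ, ∀ 𝒢 : Finset (Mt n), SKGood 𝒢 →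
    SKNet 𝒢 r ((Real.exp (-1) / C) ^ 2) 1 → ∀ k : ℕ,
    SKNet 𝒢 r ((Real.exp (-(3 / 2 : ℝ) ^ k) / C) ^ 2) ((m + 1) ^ k) := by
  obtain ⟨C, hC, m, h⟩ := sk_step n hn r hr hr4
  refine ⟨C, hC, m, fun 𝒢 hG h0 k => ?_⟩
  induction k with
  | zero => simpa using h0
  | succ k ih =>
    have := h 𝒢 _ _ hG (by positivity) (by
      rw [mul_div_cancel₀ _ hC.ne']
      rw [Real.exp_le_one_iff]
      have : (0 : ℝ) ≤ (3 / 2) ^ k := by positivity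
      linarith) ih
    have e : C * (Real.exp (-(3 / 2 : ℝ) ^ k) / C) ^ 3 =
        (Real.exp (-(3 / 2 : ℝ) ^ (k + 1)) / C) ^ 2 := by
      rw [div_pow (Real.exp _) C 3, div_pow (Real.exp _) C 2, ← Real.exp_nat_mul,
        ← Real.exp_nat_mul]
      have : ((3 : ℕ) : ℝ) * -(3 / 2 : ℝ) ^ k = ((2 : ℕ) : ℝ) * -(3 / 2 : ℝ) ^ (k + 1) := by
        rw [pow_succ]; push_cast; ring
      rw [this]
      field_simp
    rw [e] at this
    rwa [pow_succ' (m + 1)]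

lemma sk_choose_k (Q : ℝ) (hQ : 0 < Q) (m : ℕ) : ∃ C > (0 : ℝ), ∃ c > (0 : ℝ), ∀ δ : ℝ, 0 < δ →
    δ < 1 → ∃ k : ℕ, Q * Real.exp (-(3 / 2 : ℝ) ^ k) < δ ∧
      (((m + 1) ^ k + 1 : ℕ) : ℝ) ≤ C * (1 + Real.log (1 / δ)) ^ c := by
  have hl : 0 < Real.log (3 / 2) := Real.log_pos (by norm_num)
  obtain ⟨T, hT⟩ : ∃ T, T = 1 + |Real.log Q| := ⟨_, rfl⟩
  have hT1 : 1 ≤ T := by rw [hT]; linarith [abs_nonneg (Real.log Q)]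
  obtain ⟨M, hM⟩ : ∃ M : ℝ, M = m + 2 := ⟨_, rfl⟩
  have hM2 : 2 ≤ M := by rw [hM]; linarith [(Nat.cast_nonneg m : (0 : ℝ) ≤ m)]
  have hM0 : 0 < M := by linarith
  have hlM : 0 < Real.log M := Real.log_pos (by linarith)
  obtain ⟨c, hc⟩ : ∃ c, c = Real.log M / Real.log (3 / 2) := ⟨_, rfl⟩
  have hc0 : 0 < c := by rw [hc]; positivity
  refine ⟨2 * M * T ^ c, by positivity, c, hc0, fun δ hδ hδ1 => ?_⟩
  obtain ⟨D, hD⟩ : ∃ D, D = 1 + Real.log (1 / δ) := ⟨_, rfl⟩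
  have hlog : 0 < Real.log (1 / δ) := Real.log_pos (by rw [lt_div_iff₀ hδ]; linarith)
  have hD1 : 1 ≤ D := by linarith
  rw [← hD]
  have hTD : 1 ≤ T * D := by nlinarith
  have hTD0 : 0 < T * D := by linarith
  refine ⟨⌈Real.log (T * D) / Real.log (3 / 2)⌉₊, ?_, ?_⟩
  · have hk := Nat.le_ceil (Real.log (T * D) / Real.log (3 / 2))
    set k := ⌈Real.log (T * D) / Real.log (3 / 2)⌉₊
    rw [div_le_iff₀ hl, ← Real.log_pow, Real.log_le_log_iff hTD0 (by positivity)] at hk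
    have e1 : Q = Real.exp (Real.log Q) := (Real.exp_log hQ).symm
    have e2 : δ = Real.exp (-Real.log (1 / δ)) := by
      rw [one_div, Real.log_inv, neg_neg, Real.exp_log hδ]
    rw [e2, e1, Real.exp_log hQ, e1, Real.exp_log hQ]
    conv_lhs => rw [e1]
    rw [← Real.exp_add, Real.exp_lt_exp]
    have h4 := le_abs_self (Real.log Q)
    have h5 : Real.log Q + Real.log (1 / δ) < T * D := by
      have := abs_nonneg (Real.log Q)
      rw [hT, hD]; nlinarith
    linarith
  · have hk := Nat.ceil_lt_add_one (a := Real.log (T * D) / Real.log (3 / 2))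
      (div_nonneg (Real.log_nonneg hTD) hl.le)
    set k := ⌈Real.log (T * D) / Real.log (3 / 2)⌉₊
    have h1 : M ^ k ≤ M * (T * D) ^ c := by
      calc M ^ k = M ^ (k : ℝ) := (Real.rpow_natCast _ _).symm
        _ ≤ M ^ (Real.log (T * D) / Real.log (3 / 2) + 1) :=
          Real.rpow_le_rpow_of_exponent_le (by linarith) hk.le
        _ = M * M ^ (Real.log (T * D) / Real.log (3 / 2)) := by
          rw [Real.rpow_add hM0, Real.rpow_one, mul_comm]
        _ = M * (T * D) ^ c := by
          congr 1
          rw [Real.rpow_def_of_pos hM0, Real.rpow_def_of_pos hTD0, hc]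
          congr 1; ring
    rw [Real.mul_rpow (by linarith) (by linarith)] at h1
    have h2 : (1 : ℝ) ≤ M ^ k := one_le_pow₀ (by linarith)
    have h3 : ((m : ℝ) + 1) ^ k ≤ M ^ k := by
      gcongr
      rw [hM]; linarith
    push_cast
    calc _ ≤ 2 * M ^ k := by linarith
      _ ≤ 2 * (M * (T ^ c * D ^ c)) := by linarith
      _ = _ := by ring

theorem stmt15 (n : ℕ) (hn : 2 ≤ n) (R : ℝ) (hR : 0 < R) :
    ∃ ε₀ > (0 : ℝ), ∃ C > (0 : ℝ), ∃ c > (0 : ℝ),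
      ∀ 𝒢 : Finset (Matrix (Fin n) (Fin n) ℂ),
        (∀ g ∈ 𝒢, g.det = 1) →
        (∀ g ∈ 𝒢, g⁻¹ ∈ 𝒢) →
        (∀ V : Matrix (Fin n) (Fin n) ℂ, V.det = 1 → opNorm (V - 1) < R →
          ∃ g ∈ 𝒢, opNorm (V - g) ≤ ε₀) →
        ∀ V : Matrix (Fin n) (Fin n) ℂ, V.det = 1 → opNorm (V - 1) < R →
        ∀ δ : ℝ, 0 < δ → δ < 1 →
          ∃ L : List (Matrix (Fin n) (Fin n) ℂ),
            (L.length : ℝ) ≤ C * (1 + Real.log (1 / δ)) ^ c ∧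
            (∀ g ∈ L, g ∈ 𝒢) ∧
            opNorm (V - L.prod) < δ := by
  simp only [opNorm_eq_norm]
  obtain ⟨r, hr, hr4, hrR⟩ : ∃ r : ℝ, 0 < r ∧ r ≤ 1 / 4 ∧ r < R :=
    ⟨min (1 / 4) (R / 2), by positivity, min_le_left _ _,
      (min_le_right _ _).trans_lt (by linarith)⟩
  obtain ⟨C₀, hC₀, m, h⟩ := sk_iter n hn r hr hr4
  obtain ⟨K, hK, hinv⟩ := sk_inv_bound n (R + 2)
  obtain ⟨C, hC, c, hc, hk⟩ := sk_choose_k ((R + 2) / C₀ ^ 2) (by positivity) m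
  obtain ⟨ε, hε, hε1, hε2, hε3⟩ : ∃ ε : ℝ, 0 < ε ∧ ε ≤ 1 ∧ ε ≤ r / K ∧
      ε ≤ (Real.exp (-1) / C₀) ^ 2 :=
    ⟨min 1 (min (r / K) ((Real.exp (-1) / C₀) ^ 2)), by positivity, min_le_left _ _,
      (min_le_right _ _).trans (min_le_left _ _), (min_le_right _ _).trans (min_le_right _ _)⟩
  refine ⟨ε, hε, C, hC, c, hc, fun 𝒢 hd hi hnet V hV hVR δ hδ hδ1 => ?_⟩
  have hG : SKGood 𝒢 := ⟨hd, hi⟩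
  have hbase : SKNet 𝒢 r ((Real.exp (-1) / C₀) ^ 2) 1 := by
    intro U hU hU1
    obtain ⟨g, hg, hgU⟩ := hnet U hU (hU1.trans_lt hrR)
    exact ⟨g, ⟨[g], by simp, by simpa using hg, by simp⟩, hgU.trans hε3⟩
  obtain ⟨k, hk1, hk2⟩ := hk δ hδ hδ1
  obtain ⟨g, hg, hgV⟩ := hnet V hV hVR
  have hgd := hd g hg
  have hgn : ‖g‖ ≤ R + 2 := by
    have e : g = (V - 1) + 1 - (V - g) := by abel
    have q1 := norm_sub_le ((V - 1) + 1) (V - g)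
    rw [← e] at q1
    have q2 := norm_add_le (V - 1) 1
    have := sk_norm_one_le n
    linarith
  have hgi := hinv g hgd hgn
  have hgg : g * g⁻¹ = 1 := Matrix.mul_nonsing_inv _ (by rw [hgd]; exact isUnit_one)
  have hig : g⁻¹ * g = 1 := Matrix.nonsing_inv_mul _ (by rw [hgd]; exact isUnit_one)
  have hU1 : ‖V * g⁻¹ - 1‖ ≤ r := by
    have e : V * g⁻¹ - 1 = (V - g) * g⁻¹ := by rw [sub_mul, hgg]
    rw [e]
    calc _ ≤ ‖V - g‖ * ‖g⁻¹‖ := norm_mul_le _ _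
      _ ≤ (r / K) * K := mul_le_mul (hgV.trans hε2) hgi (norm_nonneg _) (by positivity)
      _ = r := by field_simp
  obtain ⟨w, hw, hwU⟩ := h 𝒢 hG hbase k (V * g⁻¹)
    (by rw [Matrix.det_mul, Matrix.det_nonsing_inv, hV, hgd]; simp) hU1
  obtain ⟨L, hL1, hL2, hL3⟩ := hw.mul (⟨[g], by simp, by simpa using hg, by simp⟩ : SKWord 𝒢 1 g)
  refine ⟨L, le_trans (by exact_mod_cast hL1) hk2, hL2, ?_⟩
  rw [hL3]
  have e : V - w * g = (V * g⁻¹ - w) * g := by rw [sub_mul, mul_assoc, hig, mul_one]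
  rw [e]
  refine lt_of_le_of_lt ?_ hk1
  have hexp : Real.exp (-(3 / 2 : ℝ) ^ k) ≤ 1 := by
    rw [Real.exp_le_one_iff]
    have : (0 : ℝ) ≤ (3 / 2) ^ k := by positivity
    linarith
  have hexp0 := Real.exp_pos (-(3 / 2 : ℝ) ^ k)
  calc _ ≤ ‖V * g⁻¹ - w‖ * ‖g‖ := norm_mul_le _ _
    _ ≤ (Real.exp (-(3 / 2 : ℝ) ^ k) / C₀) ^ 2 * (R + 2) :=
      mul_le_mul hwU hgn (norm_nonneg _) (by positivity)
    _ = ((R + 2) / C₀ ^ 2) * (Real.exp (-(3 / 2 : ℝ) ^ k)) ^ 2 := by rw [div_pow]; ring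
    _ ≤ _ := by
      gcongr
      nlinarith
end

section
/- For every n ≥ 1 there exist constants C₁ > 0, C₂ > 0 and ε₀ > 0 (depending only on n) such that: for every ε with 0 < ε ≤ ε₀ and every Hermitian positive-definite n×n complex matrix P with det P = 1 and ‖P − I‖ ≤ ε, there exist invertible n×n complex matrices V_o, W_o, V_e, W_e, each of determinant 1 and each satisfying ‖· − I‖ ≤ C₁·ε^{1/2}, such that ‖ (V_o W_o V_o⁻¹ W_o⁻¹)·(V_e W_e V_e⁻¹ W_e⁻¹) − P ‖ ≤ C₂·ε^{3/2}. -/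
open scoped ComplexOrder

open scoped Matrix.Norms.L2Operator in
theorem opNorm_eq_l2 {n : ℕ} (M : Matrix (Fin n) (Fin n) ℂ) : opNorm M = ‖M‖ := rfl

/-- The shift matrix. -/
def shiftN (n : ℕ) : Matrix (Fin n) (Fin n) ℂ :=
  Matrix.of fun i j => if (i : ℕ) + 1 = j then 1 else 0

/-- Partial sums. -/
noncomputable def psum {n : ℕ} (x : Fin n → ℂ) (m : ℕ) : ℂ :=
  ∑ j : Fin n, if (j : ℕ) < m then x j else 0

theorem psum_succ {n : ℕ} (x : Fin n → ℂ) (i : Fin n) :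
    psum x ((i : ℕ) + 1) = psum x i + x i := by
  have h : x i = ∑ j : Fin n, if j = i then x j else 0 := by simp
  unfold psum
  conv_rhs => rw [h]
  rw [← Finset.sum_add_distrib]
  refine Finset.sum_congr rfl fun j _ => ?_
  by_cases h1 : j = i
  · subst h1; simp
  · have h3 : (j : ℕ) ≠ i := fun h => h1 (Fin.ext h)
    by_cases h2 : (j : ℕ) < i
    · simp [h1, h2, Nat.lt_succ_of_lt h2]
    · have : ¬ (j : ℕ) < i + 1 := by omega
      simp [h1, h2, this]

theorem psum_zero {n : ℕ} (x : Fin n → ℂ) : psum x 0 = 0 := by simp [psum]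

theorem psum_last {n : ℕ} (x : Fin n → ℂ) (hx : ∑ i, x i = 0) : psum x n = 0 := by
  simp [psum, hx]

/-- The lower shift matrix weighted with the partial sums. -/
noncomputable def lowB {n : ℕ} (x : Fin n → ℂ) : Matrix (Fin n) (Fin n) ℂ :=
  (shiftN n).transpose * Matrix.diagonal (fun i : Fin n => psum x ((i : ℕ) + 1))

theorem lowB_apply {n : ℕ} (x : Fin n → ℂ) (i j : Fin n) :
    lowB x i j = if (j : ℕ) + 1 = i then psum x i else 0 := by
  simp only [lowB, Matrix.mul_diagonal, Matrix.transpose_apply, shiftN, Matrix.of_apply]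
  split_ifs with h
  · simp [h]
  · simp

theorem comm_eq {n : ℕ} (x : Fin n → ℂ) (hx : ∑ i, x i = 0) :
    shiftN n * lowB x - lowB x * shiftN n = Matrix.diagonal x := by
  ext i j
  have h1 : (shiftN n * lowB x) i j = if i = j then psum x ((i : ℕ) + 1) else 0 := by
    simp only [Matrix.mul_apply, lowB_apply, shiftN, Matrix.of_apply]
    by_cases hi : (i : ℕ) + 1 < n
    · rw [Finset.sum_eq_single (⟨i + 1, hi⟩ : Fin n)]
      · by_cases hij : i = j
        · subst hij; simp
        · have : (j : ℕ) ≠ i := fun h => hij (Fin.ext h.symm)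
          simp [hij, this]
      · intro b _ hb
        have : ¬ (i : ℕ) + 1 = b := fun h => hb (Fin.ext h.symm)
        simp [this]
      · simp
    · have hi2 : (i : ℕ) + 1 = n := by omega
      rw [Finset.sum_eq_zero, hi2, psum_last x hx]
      · simp
      · intro b _
        have : ¬ (i : ℕ) + 1 = b := by omega
        simp [this]
  have h2 : (lowB x * shiftN n) i j = if i = j then psum x i else 0 := by
    simp only [Matrix.mul_apply, lowB_apply, shiftN, Matrix.of_apply]
    by_cases hi : (i : ℕ) = 0
    · rw [Finset.sum_eq_zero, hi, psum_zero]
      · simp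
      · intro b _
        have : ¬ (b : ℕ) + 1 = i := by omega
        simp [this]
    · rw [Finset.sum_eq_single (⟨i - 1, by omega⟩ : Fin n)]
      · have e : (i : ℕ) - 1 + 1 = i := by omega
        simp [e, Fin.ext_iff]
      · intro b _ hb
        have : ¬ (b : ℕ) + 1 = i := fun h => hb (Fin.ext (by simp; omega))
        simp [this]
      · simp
  rw [Matrix.sub_apply, h1, h2, Matrix.diagonal_apply]
  split_ifs
  · rw [psum_succ]; ring
  · simp

theorem det_upper {n : ℕ} (c : ℂ) : (1 + c • shiftN n).det = 1 := by
  rw [Matrix.det_of_upperTriangular]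
  · simp [shiftN]
  · intro i j hij
    have h1 : (j : ℕ) < i := hij
    have h2 : ¬ (i : ℕ) + 1 = j := by omega
    have h3 : i ≠ j := fun h => by subst h; omega
    simp [shiftN, h2, h3]

theorem det_lower {n : ℕ} (c : ℂ) (x : Fin n → ℂ) : (1 + c • lowB x).det = 1 := by
  rw [Matrix.det_of_lowerTriangular]
  · simp [lowB_apply]
  · intro i j hij
    have h1 : (i : ℕ) < j := hij
    have h2 : ¬ (j : ℕ) + 1 = i := by omega
    have h3 : i ≠ j := fun h => by subst h; omega
    simp [lowB_apply, h2, h3]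

theorem log_bounds (t e : ℝ) (he : e ≤ 1 / 2) (h : |t - 1| ≤ e) :
    |Real.log t| ≤ 2 * e ∧ |1 + Real.log t - t| ≤ 2 * e ^ 2 := by
  obtain ⟨h1, h2⟩ := abs_le.1 h
  have ht : 0 < t := by linarith
  have a := Real.log_le_sub_one_of_pos ht
  have b := Real.one_sub_inv_le_log_of_pos ht
  have hti : t⁻¹ ≤ 2 := by
    rw [inv_le_comm₀ ht (by norm_num)]; linarith
  have hm : t * t⁻¹ = 1 := mul_inv_cancel₀ ht.ne'
  have hip : 0 < t⁻¹ := inv_pos.2 ht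
  have hsq : (t - 1) ^ 2 ≤ e ^ 2 := by rw [sq_le_sq, abs_of_nonneg (a := e)]; exact h; linarith
  have e2 : t - 2 + t⁻¹ = (t - 1) ^ 2 * t⁻¹ := by
    field_simp; ring
  have e1 : 1 - t⁻¹ = (t - 1) * t⁻¹ := by field_simp
  refine ⟨abs_le.2 ⟨?_, by linarith⟩, abs_le.2 ⟨?_, ?_⟩⟩
  · nlinarith
  · nlinarith [sq_nonneg (t - 1)]
  · nlinarith [sq_nonneg e]

open scoped Matrix.Norms.L2Operator in
theorem comm_bound {n : ℕ} (hn : 1 ≤ n) (X Y P : Matrix (Fin n) (Fin n) ℂ) (c r : ℝ)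
    (hc : 1 ≤ c) (hr : 0 ≤ r) (hcr : 3 * c ^ 2 * r ≤ 1 / 2)
    (hX : ‖X‖ ≤ c * r) (hY : ‖Y‖ ≤ c * r) (hL : ‖X * Y - Y * X‖ ≤ 2 * r ^ 2)
    (hP : ‖1 + (X * Y - Y * X) - P‖ ≤ 2 * r ^ 4)
    (dX : (1 + X).det = 1) (dY : (1 + Y).det = 1) :
    ‖(1 + X) * (1 + Y) * (1 + X)⁻¹ * (1 + Y)⁻¹ - P‖ ≤ (12 * c ^ 2 + 2) * r ^ 3 := by
  haveI : Nonempty (Fin n) := ⟨⟨0, hn⟩⟩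
  set L := X * Y - Y * X with hLdef
  set Z := (1 + Y) * (1 + X) with hZ
  have dZ : IsUnit Z.det := by rw [hZ, Matrix.det_mul, dX, dY]; simp
  have hZZ : Z * Z⁻¹ = 1 := Matrix.mul_nonsing_inv _ dZ
  have hZZ' : Z⁻¹ * Z = 1 := Matrix.nonsing_inv_mul _ dZ
  have hinv : (1 + X)⁻¹ * (1 + Y)⁻¹ = Z⁻¹ := by rw [hZ, Matrix.mul_inv_rev]
  have hVW : (1 + X) * (1 + Y) = Z + L := by rw [hZ, hLdef]; noncomm_ring
  have key : (1 + X) * (1 + Y) * (1 + X)⁻¹ * (1 + Y)⁻¹ - P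
      = L * (Z⁻¹ - 1) + (1 + L - P) := by
    rw [mul_assoc ((1 + X) * (1 + Y)), hinv, hVW, add_mul, hZZ]
    noncomm_ring
  have hr1 : r ≤ 1 := by nlinarith
  have hZ1 : ‖1 - Z‖ ≤ 3 * c ^ 2 * r := by
    have : 1 - Z = -(X + Y + Y * X) := by rw [hZ]; noncomm_ring
    rw [this, norm_neg]
    have h1 : ‖Y * X‖ ≤ (c * r) * (c * r) :=
      (norm_mul_le _ _).trans (mul_le_mul hY hX (norm_nonneg _) (by positivity))
    have h2 := norm_add₃_le (a := X) (b := Y) (c := Y * X)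
    have h3 : c * r ≤ c ^ 2 * r := mul_le_mul_of_nonneg_right (by nlinarith) hr
    have h4 : (c * r) * (c * r) ≤ c ^ 2 * r := by
      have : 0 ≤ c ^ 2 * r := by positivity
      nlinarith
    linarith
  have hd : Z⁻¹ - 1 = Z⁻¹ * (1 - Z) := by rw [mul_sub, hZZ', mul_one]
  have hd2 : ‖Z⁻¹ - 1‖ ≤ ‖Z⁻¹‖ * (3 * c ^ 2 * r) := by
    rw [hd]
    exact (norm_mul_le _ _).trans (mul_le_mul_of_nonneg_left hZ1 (norm_nonneg _))
  have hone : ‖(1 : Matrix (Fin n) (Fin n) ℂ)‖ = 1 := CStarRing.norm_one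
  have hT : ‖Z⁻¹‖ ≤ 2 := by
    have h1 : ‖Z⁻¹‖ ≤ ‖Z⁻¹ - 1‖ + ‖(1 : Matrix (Fin n) (Fin n) ℂ)‖ := by
      simpa using norm_add_le (Z⁻¹ - 1) 1
    have := norm_nonneg Z⁻¹
    nlinarith
  have hd3 : ‖Z⁻¹ - 1‖ ≤ 6 * c ^ 2 * r := by
    have : 0 ≤ 3 * c ^ 2 * r := by positivity
    nlinarith
  rw [key]
  have h1 : ‖L * (Z⁻¹ - 1)‖ ≤ (2 * r ^ 2) * (6 * c ^ 2 * r) :=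
    (norm_mul_le _ _).trans (mul_le_mul hL hd3 (norm_nonneg _) (by positivity))
  have h2 := norm_add_le (L * (Z⁻¹ - 1)) (1 + L - P)
  have h3 : r ^ 4 ≤ r ^ 3 := pow_le_pow_of_le_one hr hr1 (by norm_num)
  nlinarith

open scoped Matrix.Norms.L2Operator in
theorem norm_lowB {n : ℕ} (x : Fin n → ℂ) (e : ℝ) (he : 0 ≤ e) (hx : ∀ i, ‖x i‖ ≤ e) :
    ‖lowB x‖ ≤ ‖(shiftN n).transpose‖ * (n * e) := by
  refine (norm_mul_le _ _).trans (mul_le_mul_of_nonneg_left ?_ (norm_nonneg _))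
  rw [Matrix.l2_opNorm_diagonal, pi_norm_le_iff_of_nonneg (by positivity)]
  intro i
  refine (norm_sum_le _ _).trans ?_
  refine (Finset.sum_le_card_nsmul _ _ e ?_).trans ?_
  · intro j _
    split_ifs
    · exact hx j
    · simpa using he
  · simp

open scoped Matrix.Norms.L2Operator in
theorem main_l2 {n : ℕ} (hn : 1 ≤ n) (c r : ℝ) (hr : 0 < r)
    (hcdef : c = 2 * n * (‖shiftN n‖ + ‖(shiftN n).transpose‖ + 1))
    (hcr : 3 * c ^ 2 * r ≤ 1 / 2)
    (P : Matrix (Fin n) (Fin n) ℂ) (hP : P.PosDef) (hdet : P.det = 1) (hPe : ‖P - 1‖ ≤ r ^ 2) :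
    ∃ V W : Matrix (Fin n) (Fin n) ℂ, V.det = 1 ∧ W.det = 1 ∧ ‖V - 1‖ ≤ c * r ∧ ‖W - 1‖ ≤ c * r ∧
      ‖V * W * V⁻¹ * W⁻¹ - P‖ ≤ (12 * c ^ 2 + 2) * r ^ 3 := by
  have hn' : (1 : ℝ) ≤ n := by exact_mod_cast hn
  have hk1 := norm_nonneg (shiftN n)
  have hk2 := norm_nonneg (shiftN n).transpose
  have hc : 1 ≤ c := by rw [hcdef]; nlinarith
  have hr6 : r ≤ 1 / 6 := by nlinarith
  have hr2 : r ^ 2 ≤ 1 / 2 := by nlinarith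
  set lam := hP.1.eigenvalues with hlam
  set U := hP.1.eigenvectorUnitary with hU
  let Φ : Matrix (Fin n) (Fin n) ℂ → Matrix (Fin n) (Fin n) ℂ :=
    fun M => (U : Matrix (Fin n) (Fin n) ℂ) * M * star (U : Matrix (Fin n) (Fin n) ℂ)
  have hUU : star (U : Matrix (Fin n) (Fin n) ℂ) * U = 1 := Unitary.coe_star_mul_self U
  have hUU' : (U : Matrix (Fin n) (Fin n) ℂ) * star (U : Matrix (Fin n) (Fin n) ℂ) = 1 :=
    Unitary.coe_mul_star_self U
  have hΦn : ∀ M, ‖Φ M‖ = ‖M‖ := by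
    intro M
    simp only [Φ]
    rw [← Unitary.coe_star, CStarRing.norm_mul_coe_unitary, CStarRing.norm_coe_unitary_mul]
  have hΦm : ∀ M N, Φ M * Φ N = Φ (M * N) := by
    intro M N
    simp only [Φ]
    calc _ = (U : Matrix (Fin n) (Fin n) ℂ) * M * (star (U : Matrix (Fin n) (Fin n) ℂ) * U) * N
          * star (U : Matrix (Fin n) (Fin n) ℂ) := by noncomm_ring
      _ = _ := by rw [hUU]; noncomm_ring
  have hΦs : ∀ M N, Φ M - Φ N = Φ (M - N) := by
    intro M N; simp only [Φ]; noncomm_ring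
  have hΦa : ∀ M N, Φ M + Φ N = Φ (M + N) := by
    intro M N; simp only [Φ]; noncomm_ring
  have hΦ1 : Φ 1 = 1 := by simp only [Φ]; rw [mul_one, hUU']
  have hΦd : ∀ M, (Φ M).det = M.det := by
    intro M
    simp only [Φ]
    rw [Matrix.det_mul, Matrix.det_mul, mul_comm, ← mul_assoc, ← Matrix.det_mul, hUU]; simp
  have hPΦ : P = Φ (Matrix.diagonal (fun i => (lam i : ℂ))) := by
    have := hP.1.spectral_theorem
    rw [Unitary.conjStarAlgAut_apply] at this
    exact this
  have hlam1 : ∀ i, |lam i - 1| ≤ r ^ 2 := by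
    intro i
    rw [hPΦ, ← hΦ1, hΦs, hΦn, ← Matrix.diagonal_one, Matrix.diagonal_sub,
      Matrix.l2_opNorm_diagonal] at hPe
    have := (norm_le_pi_norm _ i).trans hPe
    rw [← Real.norm_eq_abs, ← Complex.norm_real]
    simpa using this
  have hpos : ∀ i, 0 < lam i := fun i => hP.eigenvalues_pos i
  have hprod : ∏ i, lam i = 1 := by
    have := hP.1.det_eq_prod_eigenvalues
    rw [hdet] at this
    have h2 : ((∏ i, lam i : ℝ) : ℂ) = 1 := by rw [this]; push_cast; rfl
    exact_mod_cast h2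
  let x : Fin n → ℂ := fun i => ((Real.log (lam i) : ℝ) : ℂ)
  have hx0 : ∑ i, x i = 0 := by
    have : ∑ i, Real.log (lam i) = 0 := by
      rw [← Real.log_prod (fun i _ => (hpos i).ne'), hprod, Real.log_one]
    simp only [x]
    exact_mod_cast this
  have hxb : ∀ i, ‖x i‖ ≤ 2 * r ^ 2 := by
    intro i
    simp only [x]
    rw [Complex.norm_real, Real.norm_eq_abs]
    exact (log_bounds _ _ hr2 (hlam1 i)).1
  have hrc : (r : ℂ) ≠ 0 := by exact_mod_cast hr.ne'
  set X := Φ ((r : ℂ) • shiftN n) with hX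
  set Y := Φ ((r : ℂ)⁻¹ • lowB x) with hY
  have hXY : X * Y - Y * X = Φ (Matrix.diagonal x) := by
    rw [hX, hY, hΦm, hΦm, hΦs, ← comm_eq x hx0]
    congr 1
    simp only [smul_mul_assoc, mul_smul_comm, smul_smul]
    rw [mul_inv_cancel₀ hrc, inv_mul_cancel₀ hrc, one_smul, one_smul]
  have nX : ‖X‖ ≤ c * r := by
    rw [hX, hΦn, norm_smul, Complex.norm_real, Real.norm_eq_abs, abs_of_pos hr, mul_comm]
    refine mul_le_mul_of_nonneg_right ?_ hr.le
    rw [hcdef]; nlinarith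
  have nY : ‖Y‖ ≤ c * r := by
    rw [hY, hΦn, norm_smul, norm_inv, Complex.norm_real, Real.norm_eq_abs, abs_of_pos hr]
    rw [inv_mul_le_iff₀ hr]
    refine (norm_lowB x (2 * r ^ 2) (by positivity) hxb).trans ?_
    have : ‖(shiftN n).transpose‖ * (2 * n) ≤ c := by rw [hcdef]; nlinarith
    have := mul_le_mul_of_nonneg_right this (sq_nonneg r)
    linarith
  have dX : (1 + X).det = 1 := by
    rw [hX, ← hΦ1, hΦa, hΦd, det_upper]
  have dY : (1 + Y).det = 1 := by
    rw [hY, ← hΦ1, hΦa, hΦd, det_lower]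
  refine ⟨1 + X, 1 + Y, dX, dY, by simpa using nX, by simpa using nY, ?_⟩
  refine comm_bound hn X Y P c r hc hr.le hcr nX nY ?_ ?_ dX dY
  · rw [hXY, hΦn, Matrix.l2_opNorm_diagonal, pi_norm_le_iff_of_nonneg (by positivity)]
    exact hxb
  · rw [hXY, hPΦ, ← hΦ1, hΦa, hΦs, hΦn, ← Matrix.diagonal_one, Matrix.diagonal_add,
      Matrix.diagonal_sub, Matrix.l2_opNorm_diagonal, pi_norm_le_iff_of_nonneg (by positivity)]
    intro i
    have := (log_bounds _ _ hr2 (hlam1 i)).2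
    rw [← Real.norm_eq_abs, ← Complex.norm_real] at this
    calc _ ≤ _ := le_of_eq (by simp [x])
      _ ≤ _ := this
      _ = _ := by ring

/-- Every Hermitian positive-definite matrix `P` with `det P = 1` and `‖P − I‖ ≤ ε`
is, up to error `C₂ ε^{3/2}`, a product of two group commutators of determinant-one
matrices at distance at most `C₁ ε^{1/2}` from the identity. -/
theorem stmt18 (n : ℕ) (hn : 1 ≤ n) :
    ∃ C₁ > (0 : ℝ), ∃ C₂ > (0 : ℝ), ∃ ε₀ > (0 : ℝ),
      ∀ ε : ℝ, 0 < ε → ε ≤ ε₀ →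
      ∀ P : Matrix (Fin n) (Fin n) ℂ, P.PosDef → P.det = 1 →
        opNorm (P - 1) ≤ ε →
        ∃ Vo Wo Ve We : Matrix (Fin n) (Fin n) ℂ,
          Vo.det = 1 ∧ Wo.det = 1 ∧ Ve.det = 1 ∧ We.det = 1 ∧
          opNorm (Vo - 1) ≤ C₁ * Real.sqrt ε ∧
          opNorm (Wo - 1) ≤ C₁ * Real.sqrt ε ∧
          opNorm (Ve - 1) ≤ C₁ * Real.sqrt ε ∧
          opNorm (We - 1) ≤ C₁ * Real.sqrt ε ∧
          opNorm ((Vo * Wo * Vo⁻¹ * Wo⁻¹) * (Ve * We * Ve⁻¹ * We⁻¹) - P) ≤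
            C₂ * (ε * Real.sqrt ε) := by
  obtain ⟨c, hcdef⟩ : ∃ c : ℝ, c = 2 * n * (opNorm (shiftN n) + opNorm (shiftN n).transpose + 1) :=
    ⟨_, rfl⟩
  have hn' : (1 : ℝ) ≤ n := by exact_mod_cast hn
  have hc : 0 < c := by
    have h1 : 0 ≤ opNorm (shiftN n) := norm_nonneg _
    have h2 : 0 ≤ opNorm (shiftN n).transpose := norm_nonneg _
    rw [hcdef]; positivity
  refine ⟨c, hc, 12 * c ^ 2 + 2, by positivity, (1 / (6 * c ^ 2)) ^ 2, by positivity, ?_⟩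
  intro ε hε hε0 P hP hdet hPe
  have hr : 0 < Real.sqrt ε := Real.sqrt_pos.2 hε
  have hsq : Real.sqrt ε ^ 2 = ε := Real.sq_sqrt hε.le
  have hr0 : Real.sqrt ε ≤ 1 / (6 * c ^ 2) := Real.sqrt_le_iff.2 ⟨by positivity, hε0⟩
  have hcr : 3 * c ^ 2 * Real.sqrt ε ≤ 1 / 2 := by
    rw [le_div_iff₀ (by positivity)] at hr0
    linarith
  obtain ⟨V, W, dV, dW, nV, nW, h⟩ :=
    main_l2 hn c (Real.sqrt ε) hr hcdef hcr P hP hdet (by rw [hsq]; exact hPe)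
  have h0 : opNorm ((1 : Matrix (Fin n) (Fin n) ℂ) - 1) ≤ c * Real.sqrt ε := by
    have : opNorm ((1 : Matrix (Fin n) (Fin n) ℂ) - 1) = 0 := by simp [opNorm]
    rw [this]; positivity
  refine ⟨V, W, 1, 1, dV, dW, by simp, by simp, nV, nW, h0, h0, ?_⟩
  have e : (V * W * V⁻¹ * W⁻¹) * ((1 : Matrix (Fin n) (Fin n) ℂ) * 1 * 1⁻¹ * 1⁻¹)
      = V * W * V⁻¹ * W⁻¹ := by simp
  rw [e]
  have e2 : ε * Real.sqrt ε = Real.sqrt ε ^ 3 := by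
    rw [pow_succ, hsq]
  rw [e2]
  exact h
end

section
/- For every n ≥ 1 there exist constants C₁ > 0, C₂ > 0 and ε₀ > 0 (depending only on n) such that: for every ε with 0 < ε ≤ ε₀ and every real orthogonal n×n matrix A with det A = 1 and ‖A − I‖ ≤ ε, there exist invertible real n×n matrices V and W, each of determinant 1, with ‖V − I‖ ≤ C₁·ε^{1/2} and ‖W − I‖ ≤ C₁·ε^{1/2}, such that ‖ A − V W V⁻¹ W⁻¹ ‖ ≤ C₂·ε^{3/2}. -/
/-- The operator norm (ℓ² → ℓ²) of a square real matrix. -/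
noncomputable def opNormR {n : ℕ} (M : Matrix (Fin n) (Fin n) ℝ) : ℝ :=
  ‖Matrix.toEuclideanCLM (𝕜 := ℝ) M‖

/-- Inverse of a perturbation of the identity. -/
theorem aux_inv {R : Type*} [NormedRing R] [NormOneClass R] (b w' : R)
    (h : (1 + b) * w' = 1) (hb : ‖b‖ ≤ 1 / 2) : ‖w' - 1‖ ≤ 2 * ‖b‖ := by
  have h1 : w' - 1 = -(b * w') := by
    rw [← h]; noncomm_ring
  have h2 : ‖w' - 1‖ ≤ ‖b‖ * ‖w'‖ := by
    rw [h1, norm_neg]; exact norm_mul_le _ _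
  have h3 : ‖w'‖ ≤ ‖w' - 1‖ + 1 := by
    have := norm_add_le (w' - 1) 1
    simpa using this
  have h4 : ‖w'‖ ≤ 2 := by nlinarith [norm_nonneg w']
  nlinarith [norm_nonneg b]

/-- The abstract commutator estimate. -/
theorem aux_comm {R : Type*} [NormedRing R] [NormOneClass R]
    (A S x y p q v' w' : R) (c t : ℝ) (ht : 0 < t) (ht1 : t ≤ 1) (hc : 1 ≤ c)
    (hct : c * t ≤ 1 / 2)
    (hA : ‖A - 1 - S‖ ≤ t ^ 3) (hS : x * y - y * x = S)
    (hx : ‖x‖ ≤ c * t) (hy : ‖y‖ ≤ c * t) (hp : ‖p‖ ≤ c * t ^ 2) (hq : ‖q‖ ≤ c * t ^ 2)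
    (ha : ‖x + p‖ ≤ c * t) (hb : ‖y + q‖ ≤ c * t)
    (hv : (1 + (x + p)) * v' = 1) (hw : (1 + (y + q)) * w' = 1) :
    ‖A - (1 + (x + p)) * (1 + (y + q)) * v' * w'‖ ≤ (1 + 4 * c ^ 2 + 2 * c ^ 2 * (4 * c + 4 * c ^ 2)) * t ^ 3 := by
  set a := x + p with hadef
  set b := y + q with hbdef
  have hc0 : 0 < c := by linarith
  have hct0 : 0 < c * t := by positivity
  have hv1 : ‖v' - 1‖ ≤ 2 * (c * t) := (aux_inv a v' hv (by linarith)).trans (by linarith)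
  have hw1 : ‖w' - 1‖ ≤ 2 * (c * t) := (aux_inv b w' hw (by linarith)).trans (by linarith)
  have e1 : (1 + b) * (1 + a) * v' * w' = 1 := by
    rw [mul_assoc (1 + b), hv, mul_one, hw]
  have e2 : A - (1 + a) * (1 + b) * v' * w'
      = (A - 1 - S) - (p * b + x * q - (q * a + y * p))
        - (a * b - b * a) * ((v' - 1) * (w' - 1) + (v' - 1) + (w' - 1)) := by
    have : (1 + a) * (1 + b) * v' * w' = 1 + (a * b - b * a) * (v' * w') := by
      have e0 : (1 + a) * (1 + b) * v' * w'
          = (1 + b) * (1 + a) * v' * w' + (a * b - b * a) * (v' * w') := by noncomm_ring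
      rw [e0, e1]
    rw [this]
    have e3 : (v' - 1) * (w' - 1) + (v' - 1) + (w' - 1) = v' * w' - 1 := by noncomm_ring
    rw [e3, ← hS, hadef, hbdef]
    noncomm_ring
  have mb : ∀ (u z : R) (α β : ℝ), ‖u‖ ≤ α → ‖z‖ ≤ β → ‖u * z‖ ≤ α * β := fun u z α β hu hz =>
    (norm_mul_le _ _).trans (mul_le_mul hu hz (norm_nonneg _) ((norm_nonneg _).trans hu))
  have k1 := mb _ _ _ _ hp hb
  have k2 := mb _ _ _ _ hx hq
  have k3 := mb _ _ _ _ hq ha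
  have k4 := mb _ _ _ _ hy hp
  have k5 := mb _ _ _ _ ha hb
  have k6 := mb _ _ _ _ hb ha
  have k7 := mb _ _ _ _ hv1 hw1
  have s1 : ‖p * b + x * q - (q * a + y * p)‖ ≤ 4 * c ^ 2 * t ^ 3 := by
    have := norm_sub_le (p * b + x * q) (q * a + y * p)
    have := norm_add_le (p * b) (x * q)
    have := norm_add_le (q * a) (y * p)
    linarith
  have s2 : ‖a * b - b * a‖ ≤ 2 * c ^ 2 * t ^ 2 := by
    have := norm_sub_le (a * b) (b * a)
    linarith
  have s3 : ‖(v' - 1) * (w' - 1) + (v' - 1) + (w' - 1)‖ ≤ (4 * c + 4 * c ^ 2) * t := by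
    have := norm_add_le ((v' - 1) * (w' - 1) + (v' - 1)) (w' - 1)
    have := norm_add_le ((v' - 1) * (w' - 1)) (v' - 1)
    have : c ^ 2 * (t * t) ≤ c ^ 2 * t := by
      apply mul_le_mul_of_nonneg_left _ (by positivity)
      nlinarith
    linarith
  have s4 := mb _ _ _ _ s2 s3
  rw [e2]
  have := norm_sub_le ((A - 1 - S) - (p * b + x * q - (q * a + y * p)))
    ((a * b - b * a) * ((v' - 1) * (w' - 1) + (v' - 1) + (w' - 1)))
  have := norm_sub_le (A - 1 - S) (p * b + x * q - (q * a + y * p))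
  linarith

/-- The solution of `[D, X] = S` for diagonal `D`, restricted to the entries in `P`. -/
noncomputable def auxT {n : ℕ} (d : Fin n → ℝ) (P : Fin n → Fin n → Prop)
    [∀ i j, Decidable (P i j)] :
    Matrix (Fin n) (Fin n) ℝ →ₗ[ℝ] Matrix (Fin n) (Fin n) ℝ where
  toFun S := Matrix.of fun i j => if P i j then S i j / (d i - d j) else 0
  map_add' S S' := by
    ext i j
    by_cases h : P i j <;> simp [h, add_div]
  map_smul' r S := by
    ext i j
    by_cases h : P i j <;> simp [h, mul_div_assoc]

open scoped Matrix.Norms.L2Operator in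
theorem aux_bound {n : ℕ} (T : Matrix (Fin n) (Fin n) ℝ →ₗ[ℝ] Matrix (Fin n) (Fin n) ℝ) :
    ∃ K : ℝ, 0 < K ∧ ∀ S, ‖T S‖ ≤ K * ‖S‖ := by
  obtain ⟨K, hK, h⟩ := (LinearMap.toContinuousLinearMap T).bound
  exact ⟨K, hK, h⟩

theorem aux_exists_d (n : ℕ) (hn : 1 ≤ n) : ∃ d : Fin n → ℝ, ∑ i, d i = 0 ∧
    Function.Injective d := by
  have hn' : (n : ℝ) ≠ 0 := by positivity
  refine ⟨fun i => (i : ℝ) - (∑ j : Fin n, (j : ℝ)) / n, ?_, ?_⟩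
  · rw [Finset.sum_sub_distrib]
    simp
    field_simp
    simp
  · intro i j h
    simp at h
    exact Fin.ext h

open scoped Matrix.Norms.L2Operator in
/-- Auxiliary copy. Every special orthogonal matrix `A` with `‖A − I‖ ≤ ε` is, up to error
`C₂ ε^{3/2}`, a group commutator of two determinant-one real matrices at distance at
most `C₁ ε^{1/2}` from the identity. -/
theorem stmt19_aux (n : ℕ) (hn : 1 ≤ n) :
    ∃ C₁ > (0 : ℝ), ∃ C₂ > (0 : ℝ), ∃ ε₀ > (0 : ℝ),
      ∀ ε : ℝ, 0 < ε → ε ≤ ε₀ →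
      ∀ A : Matrix (Fin n) (Fin n) ℝ,
        Matrix.transpose A * A = 1 → A.det = 1 →
        opNormR (A - 1) ≤ ε →
        ∃ V W : Matrix (Fin n) (Fin n) ℝ,
          V.det = 1 ∧ W.det = 1 ∧
          opNormR (V - 1) ≤ C₁ * Real.sqrt ε ∧
          opNormR (W - 1) ≤ C₁ * Real.sqrt ε ∧
          opNormR (A - V * W * V⁻¹ * W⁻¹) ≤ C₂ * (ε * Real.sqrt ε) := by
  have hop : ∀ M : Matrix (Fin n) (Fin n) ℝ, opNormR M = ‖M‖ := fun M => rfl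
  simp only [hop]
  obtain ⟨d, hd0, hdi⟩ := aux_exists_d n hn
  haveI : Nonempty (Fin n) := ⟨⟨0, hn⟩⟩
  haveI : NormOneClass (Matrix (Fin n) (Fin n) ℝ) := ⟨by
    rw [← Matrix.diagonal_one, Matrix.l2_opNorm_diagonal]; simp⟩
  set m : ℝ := ‖d‖ with hm
  have hm0 : 0 ≤ m := norm_nonneg _
  obtain ⟨K₁, hK₁, hT₁⟩ := aux_bound (auxT d (fun i j => j < i))
  obtain ⟨K₂, hK₂, hT₂⟩ := aux_bound (auxT d (fun i j => i < j))
  set c : ℝ := 1 + 2 * m + m ^ 2 + K₁ + K₂ + K₁ * K₂ with hcdef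
  have hKK : 0 < K₁ * K₂ := by positivity
  have hm2 : 0 ≤ m ^ 2 := by positivity
  have hc1 : 1 ≤ c := by linarith
  have hc0 : 0 < c := by linarith
  refine ⟨c, hc0, 1 + 4 * c ^ 2 + 2 * c ^ 2 * (4 * c + 4 * c ^ 2), by positivity,
    (1 / (2 * c)) ^ 2, by positivity, ?_⟩
  intro ε hε hε0 A hAo _ hA
  set t := Real.sqrt ε with htdef
  have ht : 0 < t := Real.sqrt_pos.2 hε
  have hεt : ε = t ^ 2 := (Real.sq_sqrt hε.le).symm
  have htc : t ≤ 1 / (2 * c) := by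
    rw [htdef]; exact (Real.sqrt_le_left (by positivity)).2 hε0
  have hct : c * t ≤ 1 / 2 := by
    calc c * t ≤ c * (1 / (2 * c)) := by gcongr
      _ = 1 / 2 := by field_simp
  have ht1 : t ≤ 1 := by nlinarith
  have hmt : m * t ≤ 1 := by nlinarith
  have ht2 : t ^ 2 ≤ t := by nlinarith
  -- the skew part
  set S : Matrix (Fin n) (Fin n) ℝ := (1 / 2 : ℝ) • (A - A.transpose) with hS
  have hTn : ‖(A - 1).transpose‖ = ‖A - 1‖ := by
    rw [← Matrix.l2_opNorm_conjTranspose (A - 1), Matrix.conjTranspose_eq_transpose_of_trivial]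
  have hSn : ‖S‖ ≤ ε := by
    have : S = (1 / 2 : ℝ) • ((A - 1) - (A - 1).transpose) := by
      rw [hS, Matrix.transpose_sub, Matrix.transpose_one]; congr 1; abel
    rw [this, norm_smul]
    have := norm_sub_le (A - 1) (A - 1).transpose
    rw [hTn] at this
    rw [Real.norm_of_nonneg (by norm_num)]
    linarith
  have hAS : ‖A - 1 - S‖ ≤ t ^ 3 := by
    have e : A - 1 - S = (-(1 / 2) : ℝ) • ((A - 1).transpose * (A - 1)) := by
      have : (A - 1).transpose * (A - 1) = (2 : ℝ) • (1 : Matrix (Fin n) (Fin n) ℝ) - A - A.transpose := by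
        rw [Matrix.transpose_sub, Matrix.transpose_one, sub_mul, mul_sub, hAo, two_smul]
        noncomm_ring
      rw [this, hS]
      module
    rw [e, norm_smul]
    have h1 := norm_mul_le (A - 1).transpose (A - 1)
    rw [hTn] at h1
    have h2 : ‖A - 1‖ * ‖A - 1‖ ≤ ε * ε := by gcongr
    have h3 : ε * ε ≤ t ^ 3 := by
      rw [hεt]
      have : t ^ 3 * t ≤ t ^ 3 * 1 := by gcongr
      linarith
    norm_num
    have := norm_nonneg ((A - 1).transpose * (A - 1))
    rw [Matrix.transpose_sub, Matrix.transpose_one] at *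
    linarith
  -- the lower and upper parts
  set L : Matrix (Fin n) (Fin n) ℝ := t⁻¹ • auxT d (fun i j => j < i) S with hL
  set U : Matrix (Fin n) (Fin n) ℝ := t⁻¹ • auxT d (fun i j => i < j) S with hU
  have hLn : ‖L‖ ≤ K₁ * t := by
    rw [hL, norm_smul, norm_inv, Real.norm_of_nonneg ht.le, inv_mul_le_iff₀ ht]
    calc _ ≤ K₁ * ‖S‖ := hT₁ S
      _ ≤ K₁ * ε := by gcongr
      _ = _ := by rw [hεt]; ring
  have hUn : ‖U‖ ≤ K₂ * t := by
    rw [hU, norm_smul, norm_inv, Real.norm_of_nonneg ht.le, inv_mul_le_iff₀ ht]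
    calc _ ≤ K₂ * ‖S‖ := hT₂ S
      _ ≤ K₂ * ε := by gcongr
      _ = _ := by rw [hεt]; ring
  have hLU : ‖L * U‖ ≤ K₁ * K₂ * t ^ 2 := by
    calc _ ≤ ‖L‖ * ‖U‖ := norm_mul_le _ _
      _ ≤ (K₁ * t) * (K₂ * t) := by gcongr
      _ = _ := by ring
  have hdetL : (1 + L).det = 1 := by
    rw [Matrix.det_of_lowerTriangular]
    · apply Finset.prod_eq_one
      intro i _
      simp [hL, auxT]
    · intro i j hij
      have hij' : i < j := hij
      simp [hL, auxT, hij'.not_gt, hij'.ne]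
  have hdetU : (1 + U).det = 1 := by
    rw [Matrix.det_of_upperTriangular]
    · apply Finset.prod_eq_one
      intro i _
      simp [hU, auxT]
    · intro i j hij
      have hij' : j < i := hij
      simp [hU, auxT, hij'.not_gt, hij'.ne']
  set x : Matrix (Fin n) (Fin n) ℝ := Matrix.diagonal (fun i => t * d i) with hx
  set p : Matrix (Fin n) (Fin n) ℝ :=
    Matrix.diagonal (fun i => Real.exp (t * d i) - 1 - t * d i) with hp
  have hdm : ∀ i, |d i| ≤ m := fun i => norm_le_pi_norm d i
  have htd : ∀ i, |t * d i| ≤ m * t := fun i => by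
    rw [abs_mul, abs_of_pos ht, mul_comm]
    exact mul_le_mul_of_nonneg_right (hdm i) ht.le
  have hxn : ‖x‖ ≤ m * t := by
    rw [hx, Matrix.l2_opNorm_diagonal]
    exact (pi_norm_le_iff_of_nonneg (by positivity)).2 htd
  have hpn : ‖p‖ ≤ m ^ 2 * t ^ 2 := by
    rw [hp, Matrix.l2_opNorm_diagonal]
    refine (pi_norm_le_iff_of_nonneg (by positivity)).2 fun i => ?_
    have h1 := Real.norm_exp_sub_one_sub_id_le (x := t * d i) ((htd i).trans hmt)
    refine h1.trans ?_
    rw [← mul_pow, Real.norm_eq_abs]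
    exact pow_le_pow_left₀ (abs_nonneg _) (htd i) 2
  have hV : 1 + (x + p) = Matrix.diagonal (fun i => Real.exp (t * d i)) := by
    rw [hx, hp, ← Matrix.diagonal_one, Matrix.diagonal_add, Matrix.diagonal_add]
    congr 1; ext i; simp
  have hdetV : (1 + (x + p)).det = 1 := by
    rw [hV, Matrix.det_diagonal, ← Real.exp_sum, ← Finset.mul_sum, hd0]; simp
  have hW : 1 + ((L + U) + L * U) = (1 + L) * (1 + U) := by noncomm_ring
  have hdetW : (1 + ((L + U) + L * U)).det = 1 := by
    rw [hW, Matrix.det_mul, hdetL, hdetU, one_mul]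
  have hcomm : x * (L + U) - (L + U) * x = S := by
    ext i j
    rw [hx, Matrix.sub_apply, Matrix.diagonal_mul, Matrix.mul_diagonal]
    rcases lt_trichotomy i j with h | h | h
    · have : d i - d j ≠ 0 := sub_ne_zero.2 (hdi.ne h.ne)
      simp only [hL, hU, auxT, Matrix.add_apply, Matrix.smul_apply, LinearMap.coe_mk,
        AddHom.coe_mk, Matrix.of_apply, h, h.not_gt, if_true, if_false, smul_eq_mul]
      field_simp
      ring
    · subst h
      simp [hS]
      ring
    · have : d i - d j ≠ 0 := sub_ne_zero.2 (hdi.ne h.ne')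
      simp only [hL, hU, auxT, Matrix.add_apply, Matrix.smul_apply, LinearMap.coe_mk,
        AddHom.coe_mk, Matrix.of_apply, h, h.not_gt, if_true, if_false, smul_eq_mul]
      field_simp
      ring
  have hyn : ‖L + U‖ ≤ (K₁ + K₂) * t := (norm_add_le _ _).trans (by linarith)
  have hle : ∀ {k : ℝ}, k ≤ c → k * t ≤ c * t := fun h => mul_le_mul_of_nonneg_right h ht.le
  have hle2 : ∀ {k : ℝ}, k ≤ c → k * t ^ 2 ≤ c * t ^ 2 :=
    fun h => mul_le_mul_of_nonneg_right h (by positivity)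
  have han : ‖x + p‖ ≤ c * t := by
    have h1 : m ^ 2 * t ^ 2 ≤ m ^ 2 * t := by gcongr
    have h2 := norm_add_le x p
    have h3 : (m + m ^ 2) * t ≤ c * t := hle (by linarith)
    linarith
  have hbn : ‖(L + U) + L * U‖ ≤ c * t := by
    have h1 : K₁ * K₂ * t ^ 2 ≤ K₁ * K₂ * t := by gcongr
    have h2 := norm_add_le (L + U) (L * U)
    have h3 : (K₁ + K₂ + K₁ * K₂) * t ≤ c * t := hle (by linarith)
    linarith
  refine ⟨1 + (x + p), 1 + ((L + U) + L * U), hdetV, hdetW, ?_, ?_, ?_⟩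
  · rwa [add_sub_cancel_left]
  · rwa [add_sub_cancel_left]
  · have := aux_comm A S x (L + U) p (L * U) (1 + (x + p))⁻¹ (1 + ((L + U) + L * U))⁻¹ c t ht ht1
      hc1 hct hAS hcomm (hxn.trans (hle (by linarith))) (hyn.trans (hle (by linarith)))
      (hpn.trans (hle2 (by linarith))) (hLU.trans (hle2 (by linarith))) han hbn
      (Matrix.mul_nonsing_inv _ (by rw [hdetV]; exact isUnit_one))
      (Matrix.mul_nonsing_inv _ (by rw [hdetW]; exact isUnit_one))
    have e : ε * t = t ^ 3 := by rw [hεt]; ring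
    rw [e]
    exact this

/-- Every special orthogonal matrix `A` with `‖A − I‖ ≤ ε` is, up to error
`C₂ ε^{3/2}`, a group commutator of two determinant-one real matrices at distance at
most `C₁ ε^{1/2}` from the identity. -/
theorem stmt19 (n : ℕ) (hn : 1 ≤ n) :
    ∃ C₁ > (0 : ℝ), ∃ C₂ > (0 : ℝ), ∃ ε₀ > (0 : ℝ),
      ∀ ε : ℝ, 0 < ε → ε ≤ ε₀ →
      ∀ A : Matrix (Fin n) (Fin n) ℝ,
        Matrix.transpose A * A = 1 → A.det = 1 →
        opNormR (A - 1) ≤ ε →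
        ∃ V W : Matrix (Fin n) (Fin n) ℝ,
          V.det = 1 ∧ W.det = 1 ∧
          opNormR (V - 1) ≤ C₁ * Real.sqrt ε ∧
          opNormR (W - 1) ≤ C₁ * Real.sqrt ε ∧
          opNormR (A - V * W * V⁻¹ * W⁻¹) ≤ C₂ * (ε * Real.sqrt ε) :=
  stmt19_aux n hn
end
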